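/- Let λ > 1, let α be Diophantine, let θ ∈ ℝ, and fix a constant C₁ ≥ 3 and a sufficiently small ε > 0. Then there exists K such that the following holds for every integer k ≥ K: let φ ∈ ℓ²(ℤ) be a normalized real eigensolution of the almost Mathieu operator, H_{λ,α,θ}φ = Eφ, with global maximum of |φ| at m_s ∈ ℤ satisfying |m_s| ≤ k; let k₀ be an integer with |k₀| ≤ 10C₁k such that |sin π(2θ + k₀α)| = min_{|x| ≤ 10C₁k, x∈ℤ} |sin π(2θ + xα)|; and set U(y) = (φ(y), φ(y−1))ᵀ ∈ ℝ². Then for every integer y with |y| ≤ C₁k, ‖U(y)‖ ≤ e^{εk}·max{ ‖U(m_s)‖·e^{−(ln λ − ε)|y − m_s|}, ‖U(k₀ − m_s)‖·e^{−(ln λ − ε)|y − (k₀ − m_s)|} }. -/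

import Mathlib

noncomputable section

open Filter Real

def distToInt (x : ℝ) : ℝ := |x - round x|

def IsDiophantine (α : ℝ) : Prop :=
  ∃ κ τ : ℝ, 0 < κ ∧ 0 < τ ∧ ∀ k : ℤ, k ≠ 0 → τ / |(k : ℝ)| ^ κ ≤ distToInt (k * α)

def deltaPhase (α θ : ℝ) : ℝ :=
  limsup (fun n : ℤ => -Real.log (distToInt (2 * θ + n * α)) / |(n : ℝ)|) cofinite

def amoPot (lam α θ : ℝ) : ℤ → ℝ := fun n => 2 * lam * Real.cos (2 * Real.pi * (θ + n * α))

def IsEigenfunction (g : ℤ → ℝ) (E : ℝ) (φ : ℤ → ℝ) : Prop :=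
  ∀ n : ℤ, φ (n + 1) + φ (n - 1) + g n * φ n = E * φ n

def deltaPot (g : ℤ → ℝ) : ℝ :=
  limsup (fun n : ℤ => -Real.log (⨆ m : ℤ, |g (n - m) - g m|) / |(n : ℝ)|) cofinite

def matNorm (M : Matrix (Fin 2) (Fin 2) ℝ) : ℝ := ⨆ p : Fin 2 × Fin 2, |M p.1 p.2|

def transfer (g : ℤ → ℝ) (E : ℝ) : ℕ → ℤ → Matrix (Fin 2) (Fin 2) ℝ
  | 0, _ => 1
  | n + 1, k => !![E - g (k + n), -1; 1, 0] * transfer g E n k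

def LyapSup (g : ℤ → ℝ) (E : ℝ) : ℝ :=
  limsup (fun n : ℕ => ⨆ k : ℤ, Real.log (matNorm (transfer g E n k)) / n) atTop

def HasSULE (g : ℤ → ℝ) : Prop :=
  ∃ (Φ : HilbertBasis ℕ ℝ (lp (fun _ : ℤ => ℝ) 2)) (ns : ℕ → ℤ) (γ : ℝ),
    0 < γ ∧
    (∀ s : ℕ, ∃ E : ℝ, IsEigenfunction g E (fun n => Φ s n)) ∧
    ∀ ε : ℝ, 0 < ε → ∃ C : ℝ,
      ∀ (s : ℕ) (n : ℤ),
        |Φ s n| ≤ C * Real.exp (ε * |(ns s : ℝ)|) * Real.exp (-γ * |(n : ℝ) - (ns s : ℝ)|)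

/-- Euclidean norm of the vector (a, b)ᵀ ∈ ℝ². -/
def pairNorm (a b : ℝ) : ℝ := Real.sqrt (a ^ 2 + b ^ 2)

def cont (f : ℤ → ℝ) : ℕ → ℤ → ℝ
  | 0, _ => 1
  | 1, k => f k
  | n + 2, k => f (k + n + 1) * cont f (n + 1) k - cont f n k

lemma cont_shift (f : ℤ → ℝ) (m : ℤ) : ∀ (n : ℕ) (k : ℤ),
    cont f n (k + m) = cont (fun i => f (i + m)) n k := by
  intro n
  induction n using Nat.twoStepInduction with
  | zero => intro k; simp [cont]
  | one => intro k; simp [cont]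
  | more n h1 h2 =>
    intro k
    simp only [cont]
    rw [h1, h2]
    congr 3
    ring

lemma cont_left (f : ℤ → ℝ) : ∀ (n : ℕ) (k : ℤ),
    cont f (n + 2) k = f k * cont f (n + 1) (k + 1) - cont f n (k + 2) := by
  intro n
  induction n using Nat.twoStepInduction with
  | zero => intro k; simp [cont]; ring
  | one =>
    intro k
    simp only [cont]
    push_cast
    rw [show k + 1 + 0 + 1 = k + 2 by ring, show k + 1 + 1 = k + 2 by ring,
      show k + 0 + 1 = k + 1 by ring]
    ring
  | more n h1 h2 =>
    intro k
    have e1 : cont f (n + 2 + 2) k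
        = f (k + n + 3) * cont f (n + 1 + 2) k - cont f (n + 2) k := by
      rw [cont]; congr 3; push_cast; ring
    have e2 : cont f (n + 2 + 1) (k + 1)
        = f (k + n + 3) * cont f (n + 1 + 1) (k + 1) - cont f (n + 1) (k + 1) := by
      rw [cont]; congr 3; push_cast; ring
    have e3 : cont f (n + 2) (k + 2)
        = f (k + n + 3) * cont f (n + 1) (k + 2) - cont f n (k + 2) := by
      rw [cont]; congr 3; ring
    rw [e1, e2, e3, h1, h2]
    ring

lemma cont_rev (f : ℤ → ℝ) : ∀ (n : ℕ) (c : ℤ),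
    cont (fun i => f (c - i)) n 0 = cont f n (c - n + 1) := by
  intro n
  induction n using Nat.twoStepInduction with
  | zero => intro c; simp [cont]
  | one => intro c; simp [cont]
  | more n h1 h2 =>
    intro c
    rw [cont_left f n, cont, h1, h2]
    rw [show c - (0 + (n : ℤ) + 1) = c - ((n + 2 : ℕ) : ℤ) + 1 by push_cast; ring,
      show c - ((n + 1 : ℕ) : ℤ) + 1 = c - ((n + 2 : ℕ) : ℤ) + 1 + 1 by push_cast; ring,
      show c - (n : ℤ) + 1 = c - ((n + 2 : ℕ) : ℤ) + 1 + 2 by push_cast; ring]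

lemma green_aux (f φ : ℤ → ℝ) (h : ∀ m, φ (m + 1) = f m * φ m - φ (m - 1)) (a : ℤ) : ∀ i : ℕ,
    cont f (i + 1) a * φ (a + i) = cont f i a * φ (a + i + 1) + φ (a - 1) := by
  intro i
  induction i with
  | zero => simp [cont]; rw [h]; ring
  | succ i ih =>
    rw [show i + 1 + 1 = i + 2 from rfl, cont]
    have := h (a + i + 1)
    push_cast
    rw [show a + (i + 1 : ℤ) + 1 = a + i + 1 + 1 by ring, this,
      show a + (i + 1 : ℤ) = a + i + 1 by ring, show a + (i : ℤ) + 1 - 1 = a + i by ring]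
    linear_combination ih

lemma green (f φ : ℤ → ℝ) (h : ∀ m, φ (m + 1) = f m * φ m - φ (m - 1)) (a : ℤ) (i : ℕ) :
    ∀ j : ℕ, cont f (i + 1 + j) a * φ (a + i)
      = cont f j (a + i + 1) * φ (a - 1) + cont f i a * φ (a + i + 1 + j) := by
  intro j
  induction j using Nat.twoStepInduction with
  | zero =>
    have := green_aux f φ h a i
    simp [cont]; linarith
  | one =>
    have h0 := green_aux f φ h a i
    have h1 := h (a + i + 1)
    rw [show i + 1 + 1 = i + 2 from rfl, cont]
    simp only [cont]
    push_cast
    rw [h1, show a + (i : ℤ) + 1 - 1 = a + i by ring]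
    linear_combination f (a + i + 1) * h0
  | more j h1 h2 =>
    have h3 := h (a + i + 1 + (j + 1))
    rw [show i + 1 + (j + 2) = (i + 1 + j) + 2 by ring, cont, cont]
    push_cast at *
    rw [show a + (i : ℤ) + 1 + (j + 2) = a + i + 1 + (j + 1) + 1 by ring, h3]
    rw [show a + (i : ℤ) + 1 + (j + 1) - 1 = a + i + 1 + j by ring]
    rw [show a + ((i : ℤ) + 1 + j) + 1 = a + i + 1 + (j + 1) by ring,
      show a + (i : ℤ) + 1 + j + 1 = a + i + 1 + (j + 1) by ring,
      show i + 1 + j + 1 = i + 1 + (j + 1) by ring]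
    linear_combination f (a + i + 1 + (j + 1)) * h2 - h1

lemma cont_bound (f : ℤ → ℝ) (X : ℝ) (hX : 1 ≤ X) (hf : ∀ i, |f i| ≤ X - 1) : ∀ (n : ℕ) (k : ℤ),
    |cont f n k| ≤ X ^ n := by
  intro n
  induction n using Nat.twoStepInduction with
  | zero => intro k; simp [cont]
  | one => intro k; simp [cont]; linarith [hf k]
  | more n h1 h2 =>
    intro k
    rw [cont]
    have e1 := h1 k
    have e2 := h2 k
    have e3 := hf (k + n + 1)
    calc _ ≤ |f (k + n + 1)| * |cont f (n + 1) k| + |cont f n k| := by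
          rw [← abs_mul]; exact abs_sub _ _
      _ ≤ (X - 1) * X ^ (n + 1) + X ^ n := by gcongr
      _ ≤ X ^ (n + 2) := by
          have : 0 ≤ X ^ n * (X - 1) := mul_nonneg (by positivity) (by linarith)
          ring_nf at *; linarith


/-- functions `A(cos x) + sin x * B(cos x)` with degree bounds -/
def IsTP (n : ℕ) (g : ℝ → ℝ) : Prop :=
  ∃ A B : Polynomial ℝ, A.degree < (n + 1 : ℕ) ∧ B.degree < (n : ℕ) ∧
    ∀ x, g x = A.eval (cos x) + sin x * B.eval (cos x)

open Polynomial in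
lemma IsTP.step {n : ℕ} {g h : ℝ → ℝ} (hg : IsTP (n + 1) g) (hh : IsTP n h) (E a b : ℝ) :
    IsTP (n + 2) (fun x => (E - a * cos x - b * sin x) * g x - h x) := by
  obtain ⟨A, B, hA, hB, hx⟩ := hg
  obtain ⟨A', B', hA', hB', hx'⟩ := hh
  have d1 : ∀ e : ℝ, ∀ c : ℝ, (C e - C c * X : ℝ[X]).degree ≤ 1 := by
    intro e c; compute_degree
  have d2 : ∀ c : ℝ, (C c * (1 - X ^ 2) : ℝ[X]).degree ≤ 2 := by
    intro c; compute_degree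
  have lt_mul : ∀ (p q : ℝ[X]) (r s : ℕ), p.degree ≤ (r : ℕ) → q.degree < (s : ℕ) →
      (p * q).degree < ((r + s : ℕ) : WithBot ℕ) := by
    intro p q r s hp hq
    by_cases hq0 : q = 0
    · subst hq0; simp
    by_cases hp0 : p = 0
    · subst hp0; simp
    rw [degree_eq_natDegree (mul_ne_zero hp0 hq0), natDegree_mul hp0 hq0]
    rw [degree_eq_natDegree hp0] at hp
    rw [degree_eq_natDegree hq0] at hq
    have hp' := Nat.cast_le.mp hp
    have hq' := Nat.cast_lt.mp hq
    exact Nat.cast_lt.mpr (by omega)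
  have mono : ∀ (p : ℝ[X]) (r s : ℕ), p.degree < (r : ℕ) → r ≤ s → p.degree < (s : ℕ) := by
    intro p r s hp hrs
    exact lt_of_lt_of_le hp (Nat.cast_le.mpr hrs)
  have lt_sub : ∀ (p q : ℝ[X]) (r : ℕ), p.degree < (r : ℕ) → q.degree < (r : ℕ) →
      (p - q).degree < (r : ℕ) := by
    intro p q r hp hq
    exact lt_of_le_of_lt (degree_sub_le _ _) (max_lt hp hq)
  refine ⟨(C E - C a * X) * A - C b * (1 - X ^ 2) * B - A',
    (C E - C a * X) * B - C b * A - B', ?_, ?_, ?_⟩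
  · apply lt_sub _ _ _ (lt_sub _ _ _ _ _)
    · exact mono _ _ _ hA' (by omega)
    · exact mono _ _ _ (lt_mul _ _ 1 _ (d1 _ _) hA) (by omega)
    · exact mono _ _ _ (lt_mul _ _ 2 _ (d2 _) hB) (by omega)
  · apply lt_sub _ _ _ (lt_sub _ _ _ _ _)
    · exact mono _ _ _ hB' (by omega)
    · exact mono _ _ _ (lt_mul _ _ 1 _ (d1 _ _) hB) (by omega)
    · exact mono _ _ _ (lt_mul _ _ 0 _ (degree_C_le) hA) (by omega)
  · intro x
    simp only [hx, hx', eval_sub, eval_mul, eval_C, eval_X, eval_one, eval_pow]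
    have := sin_sq_add_cos_sq x
    linear_combination (-b * eval (cos x) B) * this

open Polynomial in
lemma cont_isTP (E l a s : ℝ) : ∀ n : ℕ,
    IsTP n (fun x => cont (fun i => E - l * cos (x + s + i * a)) n 0) := by
  intro n
  induction n using Nat.twoStepInduction with
  | zero =>
    refine ⟨1, 0, ?_, ?_, ?_⟩
    · simp
    · simp
    · intro x; simp [cont]
  | one =>
    refine ⟨C E - C (l * cos s) * X, C (l * sin s), ?_, ?_, ?_⟩
    · exact lt_of_le_of_lt (b := (1 : WithBot ℕ)) (by compute_degree) (by norm_cast)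
    · exact lt_of_le_of_lt degree_C_le (by norm_cast)
    · intro x; simp [cont, cos_add]; ring
  | more n h1 h2 =>
    have := IsTP.step h2 h1 E (l * cos (s + (n + 1) * a)) (-(l * sin (s + (n + 1) * a)))
    convert this using 2 with x
    rw [cont]
    push_cast
    rw [show x + s + (0 + (n : ℝ) + 1) * a = x + (s + (n + 1) * a) by ring, cos_add]
    ring

open Polynomial in
lemma cont_poly (E l a : ℝ) (n : ℕ) : ∃ Q : ℝ[X], Q.degree < (n + 1 : ℕ) ∧ ∀ x,
    cont (fun i => E - l * cos (x + i * a)) n 0 = Q.eval (cos (x + (n - 1) / 2 * a)) := by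
  obtain ⟨A, B, hA, hB, h⟩ := cont_isTP E l a (-((n - 1) / 2 * a)) n
  refine ⟨A, hA, ?_⟩
  have key : ∀ x, cont (fun i => E - l * cos (x + -((n - 1) / 2 * a) + i * a)) n 0
      = A.eval (cos x) := by
    intro x
    have h1 := h x
    have h2 := h (-x)
    have h3 := cont_rev (fun i => E - l * cos (x + -((n - 1) / 2 * a) + i * a)) n (n - 1)
    rw [show (n : ℤ) - 1 - n + 1 = 0 by ring] at h3
    have h4 : (fun i : ℤ => E - l * cos (x + -(((n : ℝ) - 1) / 2 * a) + (((n : ℤ) - 1 - i : ℤ) : ℝ) * a))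
        = (fun i : ℤ => E - l * cos (-x + -(((n : ℝ) - 1) / 2 * a) + i * a)) := by
      funext i
      rw [← cos_neg]
      congr 3
      push_cast
      ring
    rw [h4] at h3
    simp only [cos_neg, sin_neg] at h2
    simp only at h1
    linarith
  intro x
  have := key (x + (n - 1) / 2 * a)
  rw [← this]
  congr 1
  funext i
  congr 3
  ring

/-- Herman's trick -/
def hcont (E l a : ℝ) : ℕ → ℂ → ℂ
  | 0, _ => 1
  | 1, z => E * z - l * (z ^ 2 + 1)
  | n + 2, z => (E * z - l * (Complex.exp (Complex.I * ((n + 1) * a : ℝ)) * z ^ 2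
      + Complex.exp (-(Complex.I * ((n + 1) * a : ℝ))))) * hcont E l a (n + 1) z - z ^ 2 * hcont E l a n z

lemma hcont_diff (E l a : ℝ) : ∀ n, Differentiable ℂ (hcont E l a n) := by
  intro n
  induction n using Nat.twoStepInduction with
  | zero =>
    have : hcont E l a 0 = fun _ => 1 := by funext z; rw [hcont]
    rw [this]; fun_prop
  | one =>
    have : hcont E l a 1 = fun z : ℂ => E * z - l * (z ^ 2 + 1) := by funext z; rw [hcont]
    rw [this]; fun_prop
  | more n h1 h2 =>
    have : hcont E l a (n + 2) = fun z : ℂ => (E * z - l * (Complex.exp (Complex.I * ((n + 1) * a : ℝ)) * z ^ 2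
      + Complex.exp (-(Complex.I * ((n + 1) * a : ℝ))))) * hcont E l a (n + 1) z - z ^ 2 * hcont E l a n z := by
      funext z; rw [hcont]
    rw [this]; fun_prop

lemma hcont_zero (E l a : ℝ) (hl : 0 ≤ l) : ∀ n, ‖hcont E l a n 0‖ = l ^ n := by
  intro n
  induction n using Nat.twoStepInduction with
  | zero => simp [hcont]
  | one => simp [hcont, abs_of_nonneg hl]
  | more n h1 h2 =>
    have e : ‖Complex.exp (-(Complex.I * ((n + 1) * a : ℝ)))‖ = 1 := by
      rw [Complex.norm_exp]; simp
    rw [hcont]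
    rw [show l ^ (n + 2) = l ^ (n + 1) * l by ring, ← h2]
    have : (0 : ℂ) ^ 2 = 0 := by simp
    rw [this, mul_zero, mul_zero, zero_mul, sub_zero, zero_add, zero_sub, norm_mul, norm_neg,
      norm_mul, e]
    simp [abs_of_nonneg hl]; ring

lemma hcont_circle (E l a x : ℝ) : ∀ n, hcont E l a n (Complex.exp (Complex.I * x))
    = Complex.exp (Complex.I * x) ^ n * (cont (fun i => E - 2 * l * cos (x + i * a)) n 0 : ℝ) := by
  have e : ∀ y : ℝ, ((2 * cos y : ℝ) : ℂ)
      = Complex.exp (Complex.I * y) + (Complex.exp (Complex.I * y))⁻¹ := by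
    intro y
    push_cast
    rw [Complex.cos, ← Complex.exp_neg]
    ring_nf
  have hne : Complex.exp (Complex.I * x) ≠ 0 := Complex.exp_ne_zero _
  intro n
  induction n using Nat.twoStepInduction with
  | zero => simp [hcont, cont]
  | one =>
    have := e x
    simp only [hcont, cont]
    simp only [Int.cast_zero, zero_mul, add_zero]
    rw [show 2 * l * cos x = l * (2 * cos x) by ring]
    push_cast at this ⊢
    rw [this]
    field_simp
  | more n h1 h2 =>
    have h3 := e (x + (n + 1) * a)
    rw [hcont, h1, h2, cont]
    push_cast at h3 ⊢
    rw [show ((2 : ℂ) * l * Complex.cos (x + (0 + n + 1) * a)) = l * (2 * Complex.cos (x + (n + 1) * a)) by ring_nf]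
    rw [h3, mul_add Complex.I, Complex.exp_add, Complex.exp_neg]
    have hne2 : Complex.exp (Complex.I * ((n + 1) * a)) ≠ 0 := Complex.exp_ne_zero _
    generalize Complex.exp (Complex.I * ((n + 1) * a)) = w at *
    generalize Complex.exp (Complex.I * x) = z at *
    generalize ((cont (fun i => E - 2 * l * cos (x + ↑i * a)) (n + 1) 0 : ℝ) : ℂ) = u
    generalize ((cont (fun i => E - 2 * l * cos (x + ↑i * a)) n 0 : ℝ) : ℂ) = v
    field_simp
    ring

lemma herman (E l a : ℝ) (hl : 0 ≤ l) (n : ℕ) (M : ℝ)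
    (hM : ∀ x, |cont (fun i => E - 2 * l * cos (x + i * a)) n 0| ≤ M) : l ^ n ≤ M := by
  rw [← hcont_zero E l a hl n]
  refine Complex.norm_le_of_forall_mem_frontier_norm_le (U := Metric.ball 0 1)
    Metric.isBounded_ball (hcont_diff E l a n).diffContOnCl ?_ (subset_closure (by simp))
  intro z hz
  rw [frontier_ball _ one_ne_zero, mem_sphere_zero_iff_norm] at hz
  have : z = Complex.exp (Complex.I * (Complex.arg z : ℝ)) := by
    conv_lhs => rw [← Complex.norm_mul_exp_arg_mul_I z, hz]
    simp [mul_comm]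
  rw [this, hcont_circle, norm_mul, norm_pow, ← this, hz, one_pow, one_mul, Complex.norm_real]
  exact hM _


def DC (α τ : ℝ) (d : ℕ) : Prop :=
  0 < τ ∧ 1 ≤ d ∧ ∀ k : ℤ, k ≠ 0 → τ ≤ |(k : ℝ)| ^ d * |sin (π * (k * α))|

lemma dist_le_sin (x : ℝ) : |x - round x| ≤ |sin (π * x)| := by
  have h1 : |sin (π * x)| = |sin (π * (x - round x))| := by
    rw [mul_sub, show π * (round x : ℝ) = (round x : ℝ) * π by ring, sin_sub_int_mul_pi, abs_mul]
    simp
  rw [h1]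
  have h2 : |x - round x| ≤ 1 / 2 := abs_sub_round x
  set u := x - round x
  have h3 : |sin (π * u)| = |sin (π * |u|)| := by
    rcases abs_cases u with h | h
    · rw [h.1]
    · rw [h.1, mul_neg, sin_neg, abs_neg]
  rw [h3]
  have h4 := mul_le_sin (x := π * |u|) (by positivity) (by nlinarith [pi_pos])
  have h5 : 2 / π * (π * |u|) = 2 * |u| := by field_simp
  rw [h5] at h4
  linarith [le_abs_self (sin (π * |u|)), abs_nonneg u]

lemma sep_aux (α τ : ℝ) (d : ℕ) (h : DC α τ d) (t : ℝ) (N l m : ℕ) (hlm : l < m) (hm : m < N) :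
    τ / (2 * N ^ d) ≤ |sin (π * (t + l * α))| ∨ τ / (2 * N ^ d) ≤ |sin (π * (t + m * α))| := by
  have hN : (0 : ℝ) < N := by exact_mod_cast (by omega : 0 < N)
  have h1 := h.2.2 ((m : ℤ) - l) (by omega)
  have h2 : |sin (π * ((((m : ℤ) - l : ℤ) : ℝ) * α))|
      ≤ |sin (π * (t + m * α))| + |sin (π * (t + l * α))| := by
    rw [show π * ((((m : ℤ) - l : ℤ) : ℝ) * α) = π * (t + m * α) - π * (t + l * α) by
      push_cast; ring, sin_sub]
    refine (abs_sub _ _).trans ?_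
    rw [abs_mul, abs_mul]
    have a1 := abs_cos_le_one (π * (t + m * α))
    have a2 := abs_cos_le_one (π * (t + l * α))
    have b1 := abs_nonneg (sin (π * (t + m * α)))
    have b2 := abs_nonneg (sin (π * (t + l * α)))
    nlinarith
  have h3 : |(((m : ℤ) - l : ℤ) : ℝ)| ≤ N := by
    push_cast
    have : (l : ℝ) < m := by exact_mod_cast hlm
    have : (m : ℝ) < N := by exact_mod_cast hm
    have : (0 : ℝ) ≤ l := by positivity
    rw [abs_of_nonneg] <;> linarith
  have h4 : τ ≤ (N : ℝ) ^ d * (|sin (π * (t + m * α))| + |sin (π * (t + l * α))|) := by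
    refine h1.trans ?_
    gcongr
  by_contra hc
  push Not at hc
  obtain ⟨c1, c2⟩ := hc
  have hp : (0 : ℝ) < N ^ d := by positivity
  rw [lt_div_iff₀ (by positivity)] at c1 c2
  nlinarith

lemma sing_sum (α τ : ℝ) (d : ℕ) (h : DC α τ d) (w ρ : ℝ) (hw : 0 < w) (hρ : 0 ≤ ρ)
    (hρw : ρ ≤ (w ^ (2 * d) * τ / 2) ^ 2) :
    ∀ (N : ℕ), 1 ≤ N → ∀ t : ℝ, ∃ l0 ∈ Finset.range N,
      ∑ l ∈ Finset.range N, log (1 + ρ / sin (π * (t + l * α)) ^ 2)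
        - log (1 + ρ / sin (π * (t + l0 * α)) ^ 2) ≤ 4 * (4 * d * w) * (N - √N) := by
  intro N
  induction N using Nat.strong_induction_on with
  | _ N ih =>
  intro hN t
  rcases Nat.lt_or_ge N 2 with h2 | h2
  · have : N = 1 := by omega
    subst this
    refine ⟨0, by simp, ?_⟩
    simp
  have hτ := h.1
  set N1 := N / 2 with hN1
  set N2 := N - N1 with hN2
  obtain ⟨l1, hl1, e1⟩ := ih N1 (by omega) (by omega) t
  obtain ⟨l2, hl2, e2⟩ := ih N2 (by omega) (by omega) (t + N1 * α)
  have hNs : N = N1 + N2 := by omega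
  have hsum : ∑ l ∈ Finset.range N, log (1 + ρ / sin (π * (t + l * α)) ^ 2)
      = ∑ l ∈ Finset.range N1, log (1 + ρ / sin (π * (t + l * α)) ^ 2)
      + ∑ l ∈ Finset.range N2, log (1 + ρ / sin (π * (t + N1 * α + l * α)) ^ 2) := by
    rw [hNs, Finset.sum_range_add]
    congr 1
    apply Finset.sum_congr rfl
    intro l _
    push_cast
    ring_nf
  rw [hsum]
  rw [Finset.mem_range] at hl1 hl2
  have hNpos : (0 : ℝ) < N := by exact_mod_cast (by omega : 0 < N)
  have bd : ∀ s : ℝ, τ / (2 * N ^ d) ≤ |s| → log (1 + ρ / s ^ 2) ≤ 4 * d * w * √N := by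
    intro s hs
    have hs0 : 0 < τ / (2 * (N : ℝ) ^ d) := by positivity
    have hsp : 0 < |s| := lt_of_lt_of_le hs0 hs
    have hs2 : 0 < s ^ 2 := by rw [← sq_abs]; positivity
    have k1 : ρ / s ^ 2 ≤ (w * √N) ^ (4 * d) := by
      rw [div_le_iff₀ hs2]
      have e : (w * √N) ^ (4 * d) * (τ / (2 * (N : ℝ) ^ d)) ^ 2 = (w ^ (2 * d) * τ / 2) ^ 2 := by
        have : (√(N : ℝ)) ^ (4 * d) = ((N : ℝ) ^ d) ^ 2 := by
          rw [show 4 * d = 2 * (2 * d) by ring, pow_mul, sq_sqrt hNpos.le]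
          rw [← pow_mul]; ring_nf
        rw [mul_pow, this]
        field_simp
        ring_nf
      calc ρ ≤ (w * √N) ^ (4 * d) * (τ / (2 * (N : ℝ) ^ d)) ^ 2 := by rw [e]; exact hρw
        _ ≤ (w * √N) ^ (4 * d) * s ^ 2 := by
          rw [← sq_abs s]; gcongr
    have k2 : 1 + ρ / s ^ 2 ≤ (1 + w * √N) ^ (4 * d) := by
      have := pow_add_pow_le (x := 1) (y := w * √N) (n := 4 * d) (by norm_num) (by positivity)
        (by have := h.2.1; omega)
      rw [one_pow] at this
      linarith
    calc log (1 + ρ / s ^ 2) ≤ log ((1 + w * √N) ^ (4 * d)) := by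
          apply log_le_log (by positivity) k2
      _ = 4 * d * log (1 + w * √N) := by rw [log_pow]; push_cast; ring
      _ ≤ 4 * d * (w * √N) := by
          have : log (1 + w * √N) ≤ w * √N := by
            have := log_le_sub_one_of_pos (x := 1 + w * √N) (by positivity)
            linarith
          gcongr
      _ = _ := by ring
  have hsq : 5 / 4 * √N ≤ √N1 + √N2 := by
    have a1 : √(N1 : ℝ) ^ 2 = N1 := sq_sqrt (by positivity)
    have a2 : √(N2 : ℝ) ^ 2 = N2 := sq_sqrt (by positivity)
    have a3 : √(N : ℝ) ^ 2 = N := sq_sqrt (by positivity)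
    have a4 : (N : ℝ) = N1 + N2 := by exact_mod_cast hNs
    have b1 : (N : ℝ) / 3 ≤ N1 := by
      have : (N : ℝ) ≤ 3 * N1 := by exact_mod_cast (by omega)
      linarith
    have b2 : (N : ℝ) / 3 ≤ N2 := by
      have : (N : ℝ) ≤ 3 * N2 := by exact_mod_cast (by omega)
      linarith
    have b3 : (N : ℝ) / 3 ≤ √N1 * √N2 := by
      rw [← sqrt_mul (by positivity)]
      apply le_sqrt_of_sq_le
      nlinarith
    apply le_of_sq_le_sq _ (by positivity)
    nlinarith
  have hcw : 0 ≤ 4 * (d : ℝ) * w := by positivity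
  have a4 : (N : ℝ) = N1 + N2 := by exact_mod_cast hNs
  have fin : 4 * (4 * d * w) * (N1 - √N1) + 4 * (4 * d * w) * (N2 - √N2) + 4 * d * w * √N
      ≤ 4 * (4 * d * w) * (N - √N) := by
    rw [a4] at hsq ⊢
    nlinarith [mul_le_mul_of_nonneg_left hsq hcw]
  have eq2 : t + ((N1 + l2 : ℕ) : ℝ) * α = t + N1 * α + l2 * α := by push_cast; ring
  rcases sep_aux α τ d h t N l1 (N1 + l2) (by omega) (by omega) with hc | hc
  · refine ⟨N1 + l2, by rw [Finset.mem_range]; omega, ?_⟩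
    rw [eq2]
    have := bd _ hc
    linarith
  · refine ⟨l1, by rw [Finset.mem_range]; omega, ?_⟩
    have := bd _ hc
    rw [eq2] at this
    linarith

lemma log_series (α τ : ℝ) (d : ℕ) (h : DC α τ d) (r : ℝ) (hr0 : 0 < r) (hr1 : r < 1) :
    ∃ C, ∀ (t : ℝ) (N : ℕ),
      |∑ l ∈ Finset.range N, log ((1 - r) ^ 2 + 4 * r * sin (π * (t + l * α)) ^ 2)| ≤ C := by
  have hτ := h.1
  have hsm : Summable (fun k : ℕ => (k : ℝ) ^ d * r ^ k / τ) := by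
    have := summable_pow_mul_geometric_of_norm_lt_one (R := ℝ) d (r := r)
      (by rw [norm_eq_abs, abs_of_pos hr0]; exact hr1)
    exact this.div_const τ
  refine ⟨2 * ∑' k : ℕ, (k : ℝ) ^ d * r ^ k / τ, ?_⟩
  intro t N
  set z : ℕ → ℂ := fun l => r * Complex.exp (Complex.I * ((2 * π * (t + l * α) : ℝ) : ℂ)) with hz
  have hexp : ∀ y : ℝ, ‖Complex.exp (Complex.I * (y : ℂ))‖ = 1 := by
    intro y; rw [mul_comm]; exact Complex.norm_exp_ofReal_mul_I y
  have hzn : ∀ l, ‖z l‖ = r := by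
    intro l
    rw [hz]; simp only
    rw [norm_mul, hexp, Complex.norm_real, norm_eq_abs, abs_of_pos hr0, mul_one]
  have hs : HasSum (fun k : ℕ => ∑ l ∈ Finset.range N, z l ^ k / k)
      (∑ l ∈ Finset.range N, -Complex.log (1 - z l)) := by
    apply hasSum_sum
    intro l _
    exact Complex.hasSum_taylorSeries_neg_log (by rw [hzn]; exact hr1)
  have hb : ‖∑ l ∈ Finset.range N, -Complex.log (1 - z l)‖ ≤ ∑' k : ℕ, (k : ℝ) ^ d * r ^ k / τ := by
    rw [← hs.tsum_eq]
    apply tsum_of_norm_bounded hsm.hasSum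
    intro k
    rcases Nat.eq_zero_or_pos k with hk | hk
    · subst hk; simp; positivity
    have hkr : (1 : ℝ) ≤ k := by exact_mod_cast hk
    have e1 : ∑ l ∈ Finset.range N, z l ^ k / k
        = (r ^ k * Complex.exp (Complex.I * ((2 * π * (k * t) : ℝ) : ℂ)) / k) *
          ∑ l ∈ Finset.range N, (Complex.exp (Complex.I * ((2 * π * (k * α) : ℝ) : ℂ))) ^ l := by
      rw [Finset.mul_sum]
      apply Finset.sum_congr rfl
      intro l _
      rw [hz]; simp only
      rw [mul_pow, ← Complex.exp_nat_mul, ← Complex.exp_nat_mul]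
      rw [div_mul_eq_mul_div, mul_assoc ((r : ℂ) ^ k), ← Complex.exp_add]
      congr 3
      push_cast
      ring
    have e2 : ‖Complex.exp (Complex.I * ((2 * π * (k * α) : ℝ) : ℂ)) - 1‖
        = 2 * |sin (π * (k * α))| := by
      rw [Complex.norm_exp_I_mul_ofReal_sub_one, norm_eq_abs, abs_mul]
      rw [show 2 * π * (k * α) / 2 = π * (k * α) by ring]
      simp
    have e3 := h.2.2 k (by omega)
    have e4 : |((k : ℤ) : ℝ)| = k := by simp
    rw [e4] at e3
    push_cast at e3
    have hspos : 0 < |sin (π * (k * α))| := by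
      by_contra hcon
      have : |sin (π * (k * α))| = 0 := le_antisymm (not_lt.mp hcon) (abs_nonneg _)
      rw [this] at e3; linarith
    have hne : Complex.exp (Complex.I * ((2 * π * (k * α) : ℝ) : ℂ)) ≠ 1 := by
      intro hcon
      rw [hcon] at e2
      simp at e2
      exact hspos.ne' (by rw [e2]; simp)
    rw [e1, geom_sum_eq hne, norm_mul, norm_div, norm_div, norm_mul, hexp, e2]
    have e5 : ‖Complex.exp (Complex.I * ((2 * π * (k * α) : ℝ) : ℂ)) ^ N - 1‖ ≤ 2 := by
      refine (norm_sub_le _ _).trans ?_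
      rw [norm_pow, hexp]; norm_num
    rw [norm_pow, Complex.norm_real, norm_eq_abs, abs_of_pos hr0, Complex.norm_natCast]
    have hk0 : (0 : ℝ) < k := by linarith
    calc r ^ k * 1 / k * (‖Complex.exp (Complex.I * ((2 * π * (k * α) : ℝ) : ℂ)) ^ N - 1‖ /
          (2 * |sin (π * (k * α))|))
        ≤ r ^ k * 1 / 1 * (2 / (2 * |sin (π * (k * α))|)) := by gcongr
      _ = r ^ k * (1 / |sin (π * (k * α))|) := by field_simp
      _ ≤ r ^ k * ((k : ℝ) ^ d / τ) := by
          apply mul_le_mul_of_nonneg_left _ (by positivity)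
          rw [div_le_div_iff₀ hspos hτ]
          linarith
      _ = _ := by ring
  have hn : ∀ l : ℕ, log ((1 - r) ^ 2 + 4 * r * sin (π * (t + l * α)) ^ 2)
      = -(2 * (-Complex.log (1 - z l)).re) := by
    intro l
    rw [Complex.neg_re, Complex.log_re]
    have : (1 - r) ^ 2 + 4 * r * sin (π * (t + l * α)) ^ 2 = ‖1 - z l‖ ^ 2 := by
      rw [← Complex.normSq_eq_norm_sq, Complex.normSq_apply, hz]
      simp only
      rw [mul_comm Complex.I]
      simp only [Complex.sub_re, Complex.sub_im, Complex.one_re, Complex.one_im, Complex.re_ofReal_mul,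
        Complex.im_ofReal_mul, Complex.exp_ofReal_mul_I_re, Complex.exp_ofReal_mul_I_im]
      have h1 := cos_sq_add_sin_sq (2 * π * (t + l * α))
      have h2 : cos (2 * π * (t + l * α)) = 1 - 2 * sin (π * (t + l * α)) ^ 2 := by
        rw [mul_assoc, cos_two_mul, cos_sq']; ring
      have h3 : sin (π * (t + l * α)) ^ 2 = (1 - cos (2 * π * (t + l * α))) / 2 := by linarith
      rw [h3]
      linear_combination (-r^2) * h1
    rw [this, log_pow]
    push_cast; ring
  simp_rw [hn]
  rw [Finset.sum_neg_distrib, abs_neg, ← Finset.mul_sum, abs_mul, ← Complex.re_sum]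
  have := (Complex.abs_re_le_norm _).trans hb
  rw [abs_of_pos (by norm_num : (0 : ℝ) < 2)]
  linarith


lemma prod_est (α τ : ℝ) (d : ℕ) (h : DC α τ d) (ε : ℝ) (hε : 0 < ε) :
    ∃ C : ℝ, 0 ≤ C ∧ ∀ (t : ℝ) (N : ℕ) (T : Finset ℕ), T ⊆ Finset.range N →
      (Finset.range N \ T).card ≤ 1 →
      (∏ l ∈ T, 4 * sin (π * (t + l * α)) ^ 2 ≤ exp (ε * N + C)) ∧
      ∀ s : ℝ, 0 < s → s ≤ 1 → (∀ l ∈ T, s ≤ |sin (π * (t + l * α))|) →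
        exp (-(ε * N + C)) * s ^ 2 ≤ ∏ l ∈ T, 4 * sin (π * (t + l * α)) ^ 2 := by
  have hτ := h.1
  have hd : (1 : ℝ) ≤ d := by exact_mod_cast h.2.1
  set w : ℝ := ε / (16 * d) with hw
  have hw0 : 0 < w := by positivity
  set δ : ℝ := w ^ (2 * d) * τ / 2 with hδ
  have hδ0 : 0 < δ := by positivity
  -- choice of r
  obtain ⟨r, hr0, hr1, hrε, hrδ, hrρ⟩ : ∃ r : ℝ, 1 / 2 ≤ r ∧ r < 1 ∧ -log r ≤ ε ∧
      (1 - r) ^ 2 / (4 * r) ≤ δ ^ 2 ∧ (1 - r) ^ 2 / (4 * r) ≤ 1 := by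
    set u : ℝ := min (1 / 2) (min (ε / 2) δ) with hu
    have hu0 : 0 < u := by simp only [hu, lt_min_iff]; exact ⟨by norm_num, by positivity, hδ0⟩
    have hu1 : u ≤ 1 / 2 := min_le_left _ _
    have hu2 : u ≤ ε / 2 := (min_le_right _ _).trans (min_le_left _ _)
    have hu3 : u ≤ δ := (min_le_right _ _).trans (min_le_right _ _)
    refine ⟨1 - u, by linarith, by linarith, ?_, ?_, ?_⟩
    · have h1 := log_le_sub_one_of_pos (x := (1 - u)⁻¹) (by
        apply inv_pos.mpr; linarith)
      rw [log_inv] at h1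
      have h2 : (1 - u)⁻¹ ≤ 1 + 2 * u := by
        rw [inv_le_iff_one_le_mul₀ (by linarith)]; nlinarith
      linarith
    · rw [div_le_iff₀ (by linarith)]
      have : (1 - (1 - u)) ^ 2 ≤ δ ^ 2 := by
        rw [sub_sub_cancel]; gcongr
      nlinarith [sq_nonneg δ]
    · rw [div_le_iff₀ (by linarith)]
      nlinarith
  have hrpos : 0 < r := by linarith
  set ρ : ℝ := (1 - r) ^ 2 / (4 * r) with hρ
  have hρ0 : 0 ≤ ρ := by positivity
  obtain ⟨C, hC⟩ := log_series α τ d h r hrpos hr1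
  have hC0 : 0 ≤ C := (abs_nonneg _).trans (hC 0 0)
  set C' : ℝ := C + (|log ((1 - r) ^ 2)| + log 4) with hC'
  have hlog4 : 0 ≤ log (4 : ℝ) := log_nonneg (by norm_num)
  have hlog2 : 0 ≤ log (2 : ℝ) := log_nonneg (by norm_num)
  refine ⟨C' + log 2, by positivity, ?_⟩
  intro t N T hT hcard
  set S : ℕ → ℝ := fun l => sin (π * (t + l * α)) with hS
  set q : ℕ → ℝ := fun l => (1 - r) ^ 2 + 4 * r * S l ^ 2 with hq
  have hr2 : 0 < (1 - r) ^ 2 := by have : 0 < 1 - r := by linarith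
                                   positivity
  have hqlow : ∀ l, (1 - r) ^ 2 ≤ q l := by
    intro l; simp only [hq]; have : 0 ≤ 4 * r * S l ^ 2 := by positivity
    linarith
  have hqpos : ∀ l, 0 < q l := fun l => lt_of_lt_of_le hr2 (hqlow l)
  have hqhi : ∀ l, q l ≤ 4 := by
    intro l; simp only [hq]
    have : S l ^ 2 ≤ 1 := sin_sq_le_one _
    nlinarith
  have hqlog : ∀ l, |log (q l)| ≤ |log ((1 - r) ^ 2)| + log 4 := by
    intro l
    have h1 := log_le_log hr2 (hqlow l)
    have h2 := log_le_log (hqpos l) (hqhi l)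
    have h3 := neg_abs_le (log ((1 - r) ^ 2))
    have h4 := abs_nonneg (log ((1 - r) ^ 2))
    rw [abs_le]; constructor <;> linarith
  have hsumT : |∑ l ∈ T, log (q l)| ≤ C' := by
    have e := Finset.sum_sdiff (f := fun l => log (q l)) hT
    have e1 := hC t N
    have e2 : |∑ l ∈ Finset.range N \ T, log (q l)| ≤ |log ((1 - r) ^ 2)| + log 4 := by
      refine (Finset.abs_sum_le_sum_abs _ _).trans ?_
      refine (Finset.sum_le_card_nsmul _ _ _ (fun l _ => hqlog l)).trans ?_
      rw [nsmul_eq_mul]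
      have : ((Finset.range N \ T).card : ℝ) ≤ 1 := by exact_mod_cast hcard
      have h4 : 0 ≤ |log ((1 - r) ^ 2)| + log 4 := by positivity
      nlinarith
    have e3 : ∑ l ∈ T, log (q l) = ∑ l ∈ Finset.range N, log (q l)
        - ∑ l ∈ Finset.range N \ T, log (q l) := by linarith
    rw [e3]
    refine (abs_sub _ _).trans ?_
    simp only [hC']
    gcongr
  have hTc : (T.card : ℝ) ≤ N := by
    have := Finset.card_le_card hT
    rw [Finset.card_range] at this
    exact_mod_cast this
  have hprodq : ∏ l ∈ T, q l = exp (∑ l ∈ T, log (q l)) := by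
    rw [exp_sum]
    apply Finset.prod_congr rfl
    intro l _
    rw [exp_log (hqpos l)]
  have hlr : log r ≤ 0 := log_nonpos hrpos.le hr1.le
  constructor
  · calc ∏ l ∈ T, 4 * S l ^ 2 ≤ ∏ l ∈ T, (r⁻¹ * q l) := by
          apply Finset.prod_le_prod
          · intro l _; positivity
          · intro l _
            have : r⁻¹ * (4 * r * S l ^ 2) = 4 * S l ^ 2 := by field_simp
            rw [← this]
            have : 0 ≤ r⁻¹ := by positivity
            apply mul_le_mul_of_nonneg_left _ this
            simp only [hq]; linarith
      _ = (r⁻¹) ^ T.card * ∏ l ∈ T, q l := by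
          rw [Finset.prod_mul_distrib, Finset.prod_const]
      _ = exp (T.card * (-log r) + ∑ l ∈ T, log (q l)) := by
          rw [hprodq, exp_add, exp_nat_mul, exp_neg, exp_log hrpos]
      _ ≤ exp (ε * N + (C' + log 2)) := by
          apply exp_le_exp.mpr
          have := (abs_le.mp hsumT).2
          have h3 : T.card * (-log r) ≤ N * ε := by
            apply mul_le_mul hTc hrε (by linarith) (by positivity)
          linarith
  · intro s hs0 hs1 hs
    have hSpos : ∀ l ∈ T, 0 < S l ^ 2 := by
      intro l hl
      rw [← sq_abs]
      have := hs l hl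
      have : 0 < |S l| := lt_of_lt_of_le hs0 this
      positivity
    have hg0 : ∀ l, 0 ≤ log (1 + ρ / S l ^ 2) := by
      intro l; apply log_nonneg
      have : 0 ≤ ρ / S l ^ 2 := by positivity
      linarith
    have hgs : ∀ l ∈ T, log (1 + ρ / S l ^ 2) ≤ log 2 - log (s ^ 2) := by
      intro l hl
      rw [← log_div (by norm_num) (by positivity)]
      apply log_le_log
      · have : 0 ≤ ρ / S l ^ 2 := by positivity
        linarith
      · have h1 : s ^ 2 ≤ S l ^ 2 := by
          rw [← sq_abs (S l)]
          have := hs l hl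
          gcongr
        have h2 : ρ / S l ^ 2 ≤ 1 / s ^ 2 := by
          apply div_le_div₀ (by norm_num) hrρ (by positivity) h1
        have h3 : 1 ≤ 1 / s ^ 2 := by
          rw [le_div_iff₀ (by positivity)]; nlinarith
        calc 1 + ρ / S l ^ 2 ≤ 1 / s ^ 2 + 1 / s ^ 2 := by linarith
          _ = 2 / s ^ 2 := by ring
    have hlogs : log (s ^ 2) ≤ 0 := log_nonpos (by positivity) (by nlinarith)
    have hsumg : ∑ l ∈ T, log (1 + ρ / S l ^ 2) ≤ ε * N + (log 2 - log (s ^ 2)) := by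
      rcases Nat.eq_zero_or_pos N with hN | hN
      · subst hN
        have : T = ∅ := by simpa using hT
        subst this
        rw [Finset.sum_empty]; push_cast; linarith
      obtain ⟨l0, hl0, hsum⟩ := sing_sum α τ d h w ρ hw0 hρ0 hrδ N hN t
      have hb : 4 * (4 * d * w) * (N - √N) ≤ ε * N := by
        have : 4 * (4 * (d : ℝ) * w) = ε := by rw [hw]; field_simp; norm_num
        rw [this]
        have := sqrt_nonneg (N : ℝ)
        nlinarith
      have hsplit : ∑ l ∈ T, log (1 + ρ / S l ^ 2) ≤
          (∑ l ∈ (Finset.range N).erase l0, log (1 + ρ / S l ^ 2)) + (log 2 - log (s ^ 2)) := by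
        by_cases hm : l0 ∈ T
        · rw [← Finset.sum_erase_add _ _ hm]
          apply add_le_add _ (hgs _ hm)
          apply Finset.sum_le_sum_of_subset_of_nonneg (Finset.erase_subset_erase _ hT)
          intro i _ _; exact hg0 i
        · have : ∑ l ∈ T, log (1 + ρ / S l ^ 2) ≤
              (∑ l ∈ (Finset.range N).erase l0, log (1 + ρ / S l ^ 2)) := by
            apply Finset.sum_le_sum_of_subset_of_nonneg
            · intro i hi
              rw [Finset.mem_erase]
              exact ⟨fun hc => hm (hc ▸ hi), hT hi⟩
            · intro i _ _; exact hg0 i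
          linarith
      rw [Finset.sum_erase_eq_sub hl0] at hsplit
      simp only [hS] at hsplit ⊢
      linarith
    have hterm : ∀ l ∈ T, 4 * S l ^ 2 = exp (log (q l) - log r - log (1 + ρ / S l ^ 2)) := by
      intro l hl
      have hsl := hSpos l hl
      have hp : 0 < 1 + ρ / S l ^ 2 := by positivity
      have hsne : S l ≠ 0 := by intro hc; rw [hc] at hsl; norm_num at hsl
      rw [exp_sub, exp_sub, exp_log (hqpos l), exp_log hrpos, exp_log hp]
      simp only [hq, hρ]
      rw [eq_div_iff (by rw [← hρ]; exact hp.ne')]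
      field_simp
      ring
    rw [Finset.prod_congr rfl hterm, ← exp_sum]
    rw [show s ^ 2 = exp (log (s ^ 2)) by rw [exp_log (by positivity)], ← exp_add]
    apply exp_le_exp.mpr
    rw [Finset.sum_sub_distrib, Finset.sum_sub_distrib, Finset.sum_const, nsmul_eq_mul]
    have := (abs_le.mp hsumT).1
    have h5 : T.card * log r ≤ 0 := mul_nonpos_of_nonneg_of_nonpos (by positivity) hlr
    linarith

lemma prod_est_int (α τ : ℝ) (d : ℕ) (h : DC α τ d) (ε : ℝ) (hε : 0 < ε) :
    ∃ C : ℝ, 0 ≤ C ∧ ∀ (t : ℝ) (a : ℤ) (N : ℕ) (T : Finset ℤ), T ⊆ Finset.Ico a (a + N) →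
      (Finset.Ico a (a + N) \ T).card ≤ 1 →
      (∏ l ∈ T, 4 * sin (π * (t + l * α)) ^ 2 ≤ exp (ε * N + C)) ∧
      ∀ s : ℝ, 0 < s → s ≤ 1 → (∀ l ∈ T, s ≤ |sin (π * (t + l * α))|) →
        exp (-(ε * N + C)) * s ^ 2 ≤ ∏ l ∈ T, 4 * sin (π * (t + l * α)) ^ 2 := by
  obtain ⟨C, hC0, hC⟩ := prod_est α τ d h ε hε
  refine ⟨C, hC0, ?_⟩
  intro t a N T hT hc
  set T' : Finset ℕ := (Finset.range N).filter (fun l => a + (l : ℤ) ∈ T) with hT'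
  have inj : Function.Injective (fun l : ℕ => a + (l : ℤ)) := by
    intro x y hxy; simpa using hxy
  have hTT : T = T'.image (fun l : ℕ => a + (l : ℤ)) := by
    ext i
    simp only [Finset.mem_image, hT', Finset.mem_filter, Finset.mem_range]
    constructor
    · intro hi
      have := Finset.mem_Ico.mp (hT hi)
      refine ⟨(i - a).toNat, ⟨by omega, ?_⟩, by omega⟩
      rw [show a + ((i - a).toNat : ℤ) = i by omega]; exact hi
    · rintro ⟨l, ⟨_, hl⟩, rfl⟩; exact hl
  have hcard : (Finset.range N \ T').card ≤ 1 := by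
    refine le_trans ?_ hc
    rw [← Finset.card_image_of_injective _ inj]
    apply Finset.card_le_card
    intro i hi
    simp only [Finset.mem_image, Finset.mem_sdiff, Finset.mem_range, hT', Finset.mem_filter,
      Finset.mem_Ico] at hi ⊢
    obtain ⟨l, ⟨h1, h2⟩, rfl⟩ := hi
    refine ⟨⟨by omega, by omega⟩, fun h3 => h2 ⟨h1, h3⟩⟩
  have key := hC (t + a * α) N T' (Finset.filter_subset _ _) hcard
  have hpr : ∏ l ∈ T, 4 * sin (π * (t + l * α)) ^ 2
      = ∏ l ∈ T', 4 * sin (π * (t + a * α + l * α)) ^ 2 := by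
    conv_lhs => rw [hTT]
    rw [Finset.prod_image (fun x _ y _ hxy => inj hxy)]
    apply Finset.prod_congr rfl
    intro l _
    push_cast
    ring_nf
  rw [hpr]
  refine ⟨key.1, ?_⟩
  intro s hs0 hs1 hs
  apply key.2 s hs0 hs1
  intro l hl
  have := hs (a + l) (Finset.mem_filter.mp hl).2
  push_cast at this
  rw [show t + a * α + l * α = t + (a + l) * α by ring]
  exact this


lemma prod_two (α τ : ℝ) (d : ℕ) (h : DC α τ d) (ε : ℝ) (hε : 0 < ε) :
    ∃ C : ℝ, 0 ≤ C ∧ ∀ (t : ℝ) (n : ℕ) (a b : ℤ) (N M : ℕ), N ≤ n → M ≤ n →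
      Disjoint (Finset.Ico a (a + N)) (Finset.Ico b (b + M)) → ∀ j : ℤ,
      (∏ l ∈ (Finset.Ico a (a + N) ∪ Finset.Ico b (b + M)).erase j, 4 * sin (π * (t + l * α)) ^ 2
        ≤ exp (ε * n + C)) ∧
      ∀ s : ℝ, 0 < s → s ≤ 1 → (∀ l ∈ (Finset.Ico a (a + N) ∪ Finset.Ico b (b + M)).erase j,
          s ≤ |sin (π * (t + l * α))|) →
        exp (-(ε * n + C)) * s ^ 4 ≤
        ∏ l ∈ (Finset.Ico a (a + N) ∪ Finset.Ico b (b + M)).erase j, 4 * sin (π * (t + l * α)) ^ 2 := by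
  obtain ⟨C, hC0, hC⟩ := prod_est_int α τ d h (ε / 2) (by positivity)
  refine ⟨2 * C, by positivity, ?_⟩
  intro t n a b N M hN hM hd j
  have hcard : ∀ I : Finset ℤ, (I \ I.erase j).card ≤ 1 := by
    intro I
    have : I \ I.erase j ⊆ {j} := by
      intro i hi
      simp only [Finset.mem_sdiff, Finset.mem_erase, not_and] at hi
      rw [Finset.mem_singleton]
      by_contra hc
      exact hi.2 hc hi.1
    exact (Finset.card_le_card this).trans (by simp)
  have h1 := hC t a N _ (Finset.erase_subset j _) (hcard _)
  have h2 := hC t b M _ (Finset.erase_subset j _) (hcard _)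
  have hun : (Finset.Ico a (a + N) ∪ Finset.Ico b (b + M)).erase j
      = (Finset.Ico a (a + N)).erase j ∪ (Finset.Ico b (b + M)).erase j := by
    exact Finset.erase_union_distrib _ _ _
  have hd' : Disjoint ((Finset.Ico a (a + N)).erase j) ((Finset.Ico b (b + M)).erase j) :=
    Finset.disjoint_of_subset_left (Finset.erase_subset _ _)
      (Finset.disjoint_of_subset_right (Finset.erase_subset _ _) hd)
  have hNr : (N : ℝ) ≤ n := by exact_mod_cast hN
  have hMr : (M : ℝ) ≤ n := by exact_mod_cast hM
  rw [hun, Finset.prod_union hd']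
  constructor
  · calc _ ≤ exp (ε / 2 * N + C) * exp (ε / 2 * M + C) := by
          apply mul_le_mul h1.1 h2.1 (Finset.prod_nonneg (fun i _ => by positivity)) (by positivity)
      _ = exp (ε / 2 * N + C + (ε / 2 * M + C)) := by rw [← exp_add]
      _ ≤ _ := by apply exp_le_exp.mpr; nlinarith
  · intro s hs0 hs1 hs
    have g1 := h1.2 s hs0 hs1 (fun l hl => hs l (Finset.mem_union_left _ hl))
    have g2 := h2.2 s hs0 hs1 (fun l hl => hs l (Finset.mem_union_right _ hl))
    calc _ ≤ exp (-(ε / 2 * N + C) + -(ε / 2 * M + C)) * s ^ 4 := by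
          gcongr
          nlinarith
      _ = (exp (-(ε / 2 * N + C)) * s ^ 2) * (exp (-(ε / 2 * M + C)) * s ^ 2) := by
          rw [exp_add]; ring
      _ ≤ _ := by
          apply mul_le_mul g1 g2 (by positivity) (Finset.prod_nonneg (fun i _ => by positivity))

open Polynomial in
lemma lagrange_nodes (α τ : ℝ) (d : ℕ) (h : DC α τ d) (ε : ℝ) (hε : 0 < ε) :
    ∃ C : ℝ, 0 ≤ C ∧ ∀ (θ s : ℝ) (n : ℕ) (a b : ℤ) (N M : ℕ), N ≤ n → M ≤ n → n + 1 ≤ N + M →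
      Disjoint (Finset.Ico a (a + N)) (Finset.Ico b (b + M)) → 0 < s → s ≤ 1 →
      (∀ j ∈ Finset.Ico a (a + N) ∪ Finset.Ico b (b + M),
        ∀ l ∈ Finset.Ico a (a + N) ∪ Finset.Ico b (b + M), j ≠ l →
          s ≤ |sin (π * (((j - l : ℤ) : ℝ) * α))| ∧
          s ≤ |sin (π * (2 * θ + ((j + l + n - 1 : ℤ) : ℝ) * α))|) →
      ∀ Q : ℝ[X], Q.degree < (n + 1 : ℕ) → ∀ x : ℝ,
      ∃ j ∈ Finset.Ico a (a + N) ∪ Finset.Ico b (b + M),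
        |Q.eval (cos x)| ≤ (2 * n) * (exp (ε * n + C) / s ^ 4) *
          |Q.eval (cos (2 * π * (θ + j * α) + (n - 1) / 2 * (2 * π * α)))| := by
  obtain ⟨C, hC0, hC⟩ := prod_two α τ d h (ε / 2) (by positivity)
  refine ⟨2 * C, by positivity, ?_⟩
  intro θ s n a b N M hN hM hNM hd hs0 hs1 hs Q hQ x
  set S := Finset.Ico a (a + N) ∪ Finset.Ico b (b + M) with hS
  set v : ℤ → ℝ := fun j => cos (2 * π * (θ + j * α) + (n - 1) / 2 * (2 * π * α)) with hv
  have hScard : S.card = N + M := by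
    rw [hS, Finset.card_union_of_disjoint hd]; simp
  -- product formula
  have hdiff : ∀ ψ : ℝ, ∀ l : ℤ, (2 * (cos (2 * π * ψ) - v l)) ^ 2
      = (4 * sin (π * ((ψ + θ + (n - 1) / 2 * α) + l * α)) ^ 2) *
        (4 * sin (π * ((-ψ + θ + (n - 1) / 2 * α) + l * α)) ^ 2) := by
    intro ψ l
    simp only [hv]
    rw [cos_sub_cos]
    have e1 : (2 * π * ψ + (2 * π * (θ + l * α) + (n - 1) / 2 * (2 * π * α))) / 2
      = π * ((ψ + θ + (n - 1) / 2 * α) + l * α) := by ring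
    have e2 : (2 * π * ψ - (2 * π * (θ + l * α) + (n - 1) / 2 * (2 * π * α))) / 2
      = - (π * ((-ψ + θ + (n - 1) / 2 * α) + l * α)) := by ring
    rw [e1, e2, sin_neg]; ring
  have hprod : ∀ ψ : ℝ, ∀ j : ℤ, ∏ l ∈ S.erase j, (2 * (cos (2 * π * ψ) - v l)) ^ 2
      = (∏ l ∈ S.erase j, 4 * sin (π * ((ψ + θ + (n - 1) / 2 * α) + l * α)) ^ 2) *
        (∏ l ∈ S.erase j, 4 * sin (π * ((-ψ + θ + (n - 1) / 2 * α) + l * α)) ^ 2) := by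
    intro ψ j
    rw [← Finset.prod_mul_distrib]
    exact Finset.prod_congr rfl (fun l _ => hdiff ψ l)
  have hup : ∀ j : ℤ, ∏ l ∈ S.erase j, (2 * (cos x - v l)) ^ 2 ≤ exp (ε * n + 2 * C) := by
    intro j
    have := hprod (x / (2 * π)) j
    rw [show 2 * π * (x / (2 * π)) = x by field_simp] at this
    rw [this]
    have h1 := (hC (x / (2 * π) + θ + (n - 1) / 2 * α) n a b N M hN hM hd j).1
    have h2 := (hC (-(x / (2 * π)) + θ + (n - 1) / 2 * α) n a b N M hN hM hd j).1
    calc _ ≤ exp (ε / 2 * n + C) * exp (ε / 2 * n + C) := by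
          apply mul_le_mul h1 h2 (Finset.prod_nonneg (fun i _ => by positivity)) (by positivity)
      _ = _ := by rw [← exp_add]; congr 1; ring
  have hlow : ∀ j ∈ S, exp (-(ε * n + 2 * C)) * s ^ 8 ≤ ∏ l ∈ S.erase j, (2 * (v j - v l)) ^ 2 := by
    intro j hj
    have := hprod (θ + j * α + (n - 1) / 2 * α) j
    rw [show cos (2 * π * (θ + j * α + (n - 1) / 2 * α)) = v j by simp only [hv]; congr 1; ring]
      at this
    rw [this]
    have h1 := (hC (θ + j * α + (n - 1) / 2 * α + θ + (n - 1) / 2 * α) n a b N M hN hM hd j).2 s hs0 hs1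
      (by
        intro l hl
        rw [Finset.mem_erase] at hl
        have := (hs j hj l hl.2 (Ne.symm hl.1)).2
        convert this using 4
        push_cast; ring)
    have h2 := (hC (-(θ + j * α + (n - 1) / 2 * α) + θ + (n - 1) / 2 * α) n a b N M hN hM hd j).2
      s hs0 hs1
      (by
        intro l hl
        rw [Finset.mem_erase] at hl
        have := (hs j hj l hl.2 (Ne.symm hl.1)).1
        rw [← abs_neg, ← sin_neg] at this
        convert this using 3
        push_cast; ring)
    calc _ = (exp (-(ε / 2 * n + C)) * s ^ 4) * (exp (-(ε / 2 * n + C)) * s ^ 4) := by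
          rw [show -(ε * n + 2 * C) = -(ε / 2 * n + C) + -(ε / 2 * n + C) by ring, exp_add]; ring
      _ ≤ _ := by
          apply mul_le_mul h1 h2 (by positivity) (Finset.prod_nonneg (fun i _ => by positivity))
  have hinj : Set.InjOn v S := by
    intro i hi j hj hij
    by_contra hne
    have h1 := hlow i hi
    have : ∏ l ∈ S.erase i, (2 * (v i - v l)) ^ 2 = 0 := by
      apply Finset.prod_eq_zero (i := j)
      · rw [Finset.mem_erase]; exact ⟨Ne.symm hne, hj⟩
      · rw [hij]; ring
    rw [this] at h1
    have : 0 < exp (-(ε * n + 2 * C)) * s ^ 8 := by positivity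
    linarith
  have hbasis : ∀ j ∈ S, |(Lagrange.basis S v j).eval (cos x)| ≤ exp (ε * n + 2 * C) / s ^ 4 := by
    intro j hj
    have e : (Lagrange.basis S v j).eval (cos x)
        = ∏ l ∈ S.erase j, ((cos x - v l) / (v j - v l)) := by
      rw [Lagrange.basis, eval_prod]
      apply Finset.prod_congr rfl
      intro l _
      simp [Lagrange.basisDivisor]
      rw [div_eq_inv_mul]
    apply abs_le_of_sq_le_sq _ (by positivity)
    rw [e, ← Finset.prod_pow]
    have e2 : ∏ l ∈ S.erase j, ((cos x - v l) / (v j - v l)) ^ 2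
        = (∏ l ∈ S.erase j, (2 * (cos x - v l)) ^ 2) / ∏ l ∈ S.erase j, (2 * (v j - v l)) ^ 2 := by
      rw [← Finset.prod_div_distrib]
      apply Finset.prod_congr rfl
      intro l _
      rw [← div_pow, mul_div_mul_left _ _ two_ne_zero]
    rw [e2]
    have hpos : 0 < exp (-(ε * n + 2 * C)) * s ^ 8 := by positivity
    calc _ ≤ exp (ε * n + 2 * C) / (exp (-(ε * n + 2 * C)) * s ^ 8) := by
          exact div_le_div₀ (by positivity) (hup j) hpos (hlow j hj)
      _ = (exp (ε * n + 2 * C) / s ^ 4) ^ 2 := by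
          rw [exp_neg]; field_simp
  have hne : S.Nonempty := by
    rw [← Finset.card_pos]; omega
  obtain ⟨j, hj, hmax⟩ := Finset.exists_max_image S (fun j => |Q.eval (v j)|) hne
  refine ⟨j, hj, ?_⟩
  have hQe := Lagrange.eq_interpolate hinj (f := Q) (by
    refine lt_of_lt_of_le hQ ?_
    rw [hScard]; exact_mod_cast hNM)
  have hQx : Q.eval (cos x) = ∑ i ∈ S, Q.eval (v i) * (Lagrange.basis S v i).eval (cos x) := by
    conv_lhs => rw [hQe]
    rw [Lagrange.interpolate_apply, eval_finsetSum]
    simp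
  rw [hQx]
  calc _ ≤ ∑ i ∈ S, |Q.eval (v i) * (Lagrange.basis S v i).eval (cos x)| :=
        Finset.abs_sum_le_sum_abs _ _
    _ ≤ ∑ i ∈ S, |Q.eval (v j)| * (exp (ε * n + 2 * C) / s ^ 4) := by
        apply Finset.sum_le_sum
        intro i hi
        rw [abs_mul]
        exact mul_le_mul (hmax i hi) (hbasis i hi) (abs_nonneg _) (abs_nonneg _)
    _ = (N + M) * (|Q.eval (v j)| * (exp (ε * n + 2 * C) / s ^ 4)) := by
        rw [Finset.sum_const, hScard, nsmul_eq_mul]; push_cast; ring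
    _ ≤ (2 * n) * (|Q.eval (v j)| * (exp (ε * n + 2 * C) / s ^ 4)) := by
        apply mul_le_mul_of_nonneg_right _ (by positivity)
        have hNr : (N : ℝ) ≤ n := by exact_mod_cast hN
        have hMr : (M : ℝ) ≤ n := by exact_mod_cast hM
        linarith
    _ = _ := by ring


lemma pot_bound (lam E x : ℝ) (hl : 0 ≤ lam) (hE : |E| ≤ 2 + 2 * lam) :
    |E - 2 * lam * cos x| ≤ (3 + 4 * lam) - 1 := by
  have h1 := abs_le.mp hE
  have h2 := neg_one_le_cos x
  have h3 := cos_le_one x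
  rw [abs_le]; constructor <;> nlinarith

lemma scale (lam α E η : ℝ) (hlam : 1 < lam) (hE : |E| ≤ 2 + 2 * lam) (hη : 0 < η)
    (k : ℕ) (hk : 1 ≤ k) :
    ∃ (n : ℕ) (Λ : ℝ), 1 ≤ n ∧ n ≤ k ∧ (k : ℝ) ≤ n * exp (log (3 + 4 * lam) / η) ∧
      log lam ≤ Λ ∧
      (∀ a : ℕ, a ≤ n → ∀ x : ℝ,
        |cont (fun i => E - 2 * lam * cos (x + i * (2 * π * α))) a 0| ≤ exp (a * Λ + η * n)) ∧
      ∃ x : ℝ, exp (n * Λ) / 2 ≤ |cont (fun i => E - 2 * lam * cos (x + i * (2 * π * α))) n 0| := by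
  set F : ℕ → ℝ → ℝ := fun n x => |cont (fun i => E - 2 * lam * cos (x + i * (2 * π * α))) n 0| with hF
  set X : ℝ := 3 + 4 * lam with hX
  have hX1 : 1 < X := by rw [hX]; linarith
  have hb : ∀ n x, F n x ≤ X ^ n := fun n x =>
    cont_bound _ X hX1.le (fun i => pot_bound lam E _ (by linarith) hE) n 0
  have hbdd : ∀ n, BddAbove (Set.range (F n)) := fun n => ⟨X ^ n, by rintro _ ⟨x, rfl⟩; exact hb n x⟩
  set M : ℕ → ℝ := fun n => ⨆ x, F n x with hM
  have hFM : ∀ n x, F n x ≤ M n := fun n x => le_ciSup (hbdd n) x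
  have hMX : ∀ n, M n ≤ X ^ n := fun n => ciSup_le (hb n)
  have hMl : ∀ n, lam ^ n ≤ M n := fun n => herman E lam (2 * π * α) (by linarith) n _ (hFM n)
  have hM0 : ∀ n, 0 < M n := fun n => lt_of_lt_of_le (by positivity) (hMl n)
  have hL : 0 < log lam := log_pos hlam
  have hlogl : ∀ n : ℕ, n * log lam ≤ log (M n) := fun n => by
    rw [← log_pow]; exact log_le_log (by positivity) (hMl n)
  have hlogX : ∀ n : ℕ, log (M n) ≤ n * log X := fun n => by
    rw [← log_pow]; exact log_le_log (hM0 n) (hMX n)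
  obtain ⟨n, hn, hmax⟩ := Finset.exists_max_image (Finset.Icc 1 k)
    (fun n : ℕ => log (M n) / n + η * log n) ⟨1, by simp [hk]⟩
  rw [Finset.mem_Icc] at hn
  have hn0 : (0 : ℝ) < n := by exact_mod_cast hn.1
  have hk0 : (0 : ℝ) < k := by exact_mod_cast hk
  have hMe : exp (n * (log (M n) / n)) = M n := by
    rw [mul_div_cancel₀ _ hn0.ne', exp_log (hM0 n)]
  refine ⟨n, log (M n) / n, hn.1, hn.2, ?_, ?_, ?_, ?_⟩
  · have h1 := hmax k (by simp [hk])
    have h2 : log (M n) / n ≤ log X := by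
      rw [div_le_iff₀ hn0]; linarith [hlogX n]
    have h3 : 0 ≤ log (M k) / k := by
      have := hlogl k
      apply div_nonneg _ hk0.le
      nlinarith
    have h4 : log k ≤ log n + log X / η := by
      have : η * (log k - log n) ≤ log X := by linarith
      rw [← sub_le_iff_le_add', le_div_iff₀ hη]; linarith
    calc (k : ℝ) = exp (log k) := (exp_log hk0).symm
      _ ≤ exp (log n + log X / η) := exp_le_exp.mpr h4
      _ = _ := by rw [exp_add, exp_log hn0]
  · rw [le_div_iff₀ hn0]; linarith [hlogl n]
  · intro a ha x
    refine (hFM a x).trans ?_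
    rcases Nat.eq_zero_or_pos a with rfl | hapos
    · have := hMX 0
      simp only [pow_zero] at this
      refine this.trans (one_le_exp ?_)
      simp; positivity
    · have ha0 : (0 : ℝ) < a := by exact_mod_cast hapos
      have h1 := hmax a (by simp; omega)
      rw [← exp_log (hM0 a)]
      apply exp_le_exp.mpr
      have h2 : log (n / a) ≤ n / a - 1 := log_le_sub_one_of_pos (by positivity)
      rw [log_div hn0.ne' ha0.ne'] at h2
      have h3 : log (M a) / a ≤ log (M n) / n + η * (n / a - 1) := by
        nlinarith
      rw [div_le_iff₀ ha0] at h3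
      have h4 : (log (M n) / n + η * (n / a - 1)) * a = a * (log (M n) / n) + η * (n - a) := by
        field_simp
      nlinarith
  · rw [hMe]
    obtain ⟨x, hx⟩ := exists_lt_of_lt_ciSup (show M n / 2 < ⨆ x, F n x by
      show M n / 2 < M n; linarith [hM0 n])
    exact ⟨x, hx.le⟩


lemma cont_amo (lam α θ E : ℝ) (n : ℕ) (j : ℤ) :
    cont (fun i => E - amoPot lam α θ i) n j =
      cont (fun i => E - 2 * lam * cos (2 * π * (θ + j * α) + i * (2 * π * α))) n 0 := by
  have := cont_shift (fun i => E - amoPot lam α θ i) j n 0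
  rw [zero_add] at this
  rw [this]
  congr 1
  funext i
  simp only [amoPot]
  push_cast
  congr 3
  ring

lemma big_box (α τ : ℝ) (d : ℕ) (h : DC α τ d) (ε : ℝ) (hε : 0 < ε) :
    ∃ C : ℝ, 0 ≤ C ∧ ∀ (lam θ E s Λ : ℝ) (n : ℕ) (a b : ℤ) (N M : ℕ), N ≤ n → M ≤ n → n + 1 ≤ N + M →
      Disjoint (Finset.Ico a (a + N)) (Finset.Ico b (b + M)) → 0 < s → s ≤ 1 →
      (∀ j ∈ Finset.Ico a (a + N) ∪ Finset.Ico b (b + M),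
        ∀ l ∈ Finset.Ico a (a + N) ∪ Finset.Ico b (b + M), j ≠ l →
          s ≤ |sin (π * (((j - l : ℤ) : ℝ) * α))| ∧
          s ≤ |sin (π * (2 * θ + ((j + l + n - 1 : ℤ) : ℝ) * α))|) →
      (∃ x : ℝ, exp (n * Λ) / 2 ≤ |cont (fun i => E - 2 * lam * cos (x + i * (2 * π * α))) n 0|) →
      ∃ j ∈ Finset.Ico a (a + N) ∪ Finset.Ico b (b + M),
        exp (n * Λ) ≤ (4 * n) * (exp (ε * n + C) / s ^ 4) *
          |cont (fun i => E - amoPot lam α θ i) n j| := by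
  obtain ⟨C, hC0, hC⟩ := lagrange_nodes α τ d h ε hε
  refine ⟨C, hC0, ?_⟩
  rintro lam θ E s Λ n a b N M hN hM hNM hd hs0 hs1 hs ⟨x, hx⟩
  obtain ⟨Q, hQ, hQe⟩ := cont_poly E (2 * lam) (2 * π * α) n
  obtain ⟨j, hj, hj2⟩ := hC θ s n a b N M hN hM hNM hd hs0 hs1 hs Q hQ (x + (n - 1) / 2 * (2 * π * α))
  refine ⟨j, hj, ?_⟩
  rw [cont_amo, hQe]
  rw [hQe] at hx
  linarith

lemma dc_of_dioph (α : ℝ) (h : IsDiophantine α) : ∃ τ d, DC α τ d := by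
  obtain ⟨κ, τ, hκ, hτ, h⟩ := h
  refine ⟨τ, max 1 ⌈κ⌉₊, hτ, le_max_left _ _, ?_⟩
  intro k hk
  have h1 := h k hk
  have hk1 : (1 : ℝ) ≤ |(k : ℝ)| := by
    rw [← Int.cast_abs]; exact_mod_cast Int.one_le_abs hk
  have h2 : |(k : ℝ)| ^ κ ≤ |(k : ℝ)| ^ (max 1 ⌈κ⌉₊) := by
    rw [← rpow_natCast]
    apply rpow_le_rpow_of_exponent_le hk1
    exact (Nat.le_ceil κ).trans (by exact_mod_cast le_max_right _ _)
  have h3 : 0 < |(k : ℝ)| ^ κ := rpow_pos_of_pos (by linarith) _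
  rw [div_le_iff₀ h3] at h1
  have h4 := dist_le_sin (k * α)
  unfold distToInt at h1
  calc τ ≤ |(k * α : ℝ) - round (k * α : ℝ)| * |(k : ℝ)| ^ κ := h1
    _ ≤ |sin (π * (k * α))| * |(k : ℝ)| ^ (max 1 ⌈κ⌉₊) := by gcongr
    _ = _ := mul_comm _ _

lemma small_divisor (α τ θ R : ℝ) (d : ℕ) (h : DC α τ d) (k₀ : ℤ) (hR : 1 ≤ R) (hk : |(k₀ : ℝ)| ≤ R)
    (hmin : ∀ x : ℤ, |(x : ℝ)| ≤ R → |sin (π * (2 * θ + k₀ * α))| ≤ |sin (π * (2 * θ + x * α))|) :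
    0 < τ / (2 * (2 * R) ^ d) ∧ τ / (2 * (2 * R) ^ d) ≤ 1 ∧
    (∀ x : ℤ, x ≠ 0 → |(x : ℝ)| ≤ R → τ / (2 * (2 * R) ^ d) ≤ |sin (π * (x * α))|) ∧
    (∀ x : ℤ, x ≠ k₀ → |(x : ℝ)| ≤ R → τ / (2 * (2 * R) ^ d) ≤ |sin (π * (2 * θ + x * α))|) := by
  obtain ⟨hτ, hd, h⟩ := h
  have key : ∀ x : ℤ, x ≠ 0 → |(x : ℝ)| ≤ 2 * R → τ / (2 * R) ^ d ≤ |sin (π * (x * α))| := by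
    intro x hx hxR
    rw [div_le_iff₀ (by positivity)]
    refine (h x hx).trans ?_
    rw [mul_comm]
    gcongr
  have e : τ / (2 * (2 * R) ^ d) = (τ / (2 * R) ^ d) / 2 := by field_simp
  have hp : 0 < τ / (2 * R) ^ d := by positivity
  rw [e]
  refine ⟨by positivity, ?_, ?_, ?_⟩
  · have := key 1 (by norm_num) (by norm_num; linarith)
    have := this.trans (abs_sin_le_one _)
    linarith
  · intro x hx hxR
    have := key x hx (by linarith)
    linarith
  · intro x hx hxR
    have h1 := key (x - k₀) (sub_ne_zero.mpr hx) (by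
      push_cast
      have := abs_sub (x : ℝ) k₀
      linarith)
    have h2 := hmin x hxR
    have e2 : sin (π * (((x - k₀ : ℤ) : ℝ) * α)) =
        sin (π * (2 * θ + x * α)) * cos (π * (2 * θ + k₀ * α)) -
        cos (π * (2 * θ + x * α)) * sin (π * (2 * θ + k₀ * α)) := by
      rw [← sin_sub]; congr 1; push_cast; ring
    rw [e2] at h1
    have h3 := abs_sub (sin (π * (2 * θ + x * α)) * cos (π * (2 * θ + k₀ * α)))
        (cos (π * (2 * θ + x * α)) * sin (π * (2 * θ + k₀ * α)))
    rw [abs_mul, abs_mul] at h3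
    have h4 := abs_cos_le_one (π * (2 * θ + k₀ * α))
    have h5 := abs_cos_le_one (π * (2 * θ + x * α))
    have h6 : |sin (π * (2 * θ + x * α))| * |cos (π * (2 * θ + k₀ * α))| ≤ |sin (π * (2 * θ + x * α))| :=
      mul_le_of_le_one_right (abs_nonneg _) h4
    have h7 : |cos (π * (2 * θ + x * α))| * |sin (π * (2 * θ + k₀ * α))| ≤ |sin (π * (2 * θ + k₀ * α))| :=
      mul_le_of_le_one_left (abs_nonneg _) h5
    linarith


lemma two_point (n : ℕ) (hn : 12 ≤ n) (S1 S2 Big : ℤ → Prop) (p q k₀ T : ℤ)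
    (hp1 : |p| ≤ T) (hq1 : |q| ≤ T) (hpq : (n : ℤ) < |p - q|) (hpqk : (n : ℤ) < |p + q - k₀|)
    (hpk : (n : ℤ) < |2 * p - k₀|)
    (hS1 : ∀ x : ℤ, x ≠ 0 → |x| ≤ 2 * T + 3 * n → S1 x)
    (hS2 : ∀ x : ℤ, x ≠ k₀ → |x| ≤ 2 * T + 3 * n → S2 x)
    (hbig : ∀ (a b : ℤ) (N M : ℕ), N ≤ n → M ≤ n → n + 1 ≤ N + M →
      Disjoint (Finset.Ico a (a + N)) (Finset.Ico b (b + M)) →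
      (∀ j ∈ Finset.Ico a (a + N) ∪ Finset.Ico b (b + M),
        ∀ l ∈ Finset.Ico a (a + N) ∪ Finset.Ico b (b + M), j ≠ l →
          S1 (j - l) ∧ S2 (j + l + n - 1)) →
      ∃ j ∈ Finset.Ico a (a + N) ∪ Finset.Ico b (b + M), Big j) :
    ∃ j, Big j ∧ (((n : ℤ) ≤ 10 * (p - j + 1) ∧ (n : ℤ) ≤ 10 * (j + n - p)) ∨
      ((n : ℤ) ≤ 10 * (q - j + 1) ∧ (n : ℤ) ≤ 10 * (j + n - q))) := by
  rw [abs_le] at hp1 hq1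
  rw [lt_abs] at hpq hpqk hpk
  simp only [abs_le] at hS1 hS2
  obtain ⟨h, hh⟩ : ∃ h : ℕ, h = 2 * n / 5 := ⟨_, rfl⟩
  obtain ⟨g, hg⟩ : ∃ g : ℤ, g = (n : ℤ) / 2 := ⟨_, rfl⟩
  by_cases hqk : k₀ ≤ 2 * q
  · obtain ⟨j, hj, hB⟩ := hbig (p - g - h) (q - g + 1) (2 * h + 1) h (by omega) (by omega) (by omega)
      (by
        rw [Finset.disjoint_left]
        intro x h1 h2
        rw [Finset.mem_Ico] at h1 h2
        push_cast at h1 h2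
        omega)
      (by
        intro j hj l hl hjl
        rw [Finset.mem_union, Finset.mem_Ico, Finset.mem_Ico] at hj hl
        push_cast at hj hl
        refine ⟨hS1 _ (by omega) (by omega), hS2 _ ?_ (by omega)⟩
        rcases hj with hj | hj <;> rcases hl with hl | hl <;> omega)
    refine ⟨j, hB, ?_⟩
    rw [Finset.mem_union, Finset.mem_Ico, Finset.mem_Ico] at hj
    push_cast at hj
    rcases hj with hj | hj
    · left; omega
    · right; omega
  · obtain ⟨j, hj, hB⟩ := hbig (p - g - h) (q - g - h + 1) (2 * h + 1) h (by omega) (by omega) (by omega)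
      (by
        rw [Finset.disjoint_left]
        intro x h1 h2
        rw [Finset.mem_Ico] at h1 h2
        push_cast at h1 h2
        omega)
      (by
        intro j hj l hl hjl
        rw [Finset.mem_union, Finset.mem_Ico, Finset.mem_Ico] at hj hl
        push_cast at hj hl
        refine ⟨hS1 _ (by omega) (by omega), hS2 _ ?_ (by omega)⟩
        rcases hj with hj | hj <;> rcases hl with hl | hl <;> omega)
    refine ⟨j, hB, ?_⟩
    rw [Finset.mem_union, Finset.mem_Ico, Finset.mem_Ico] at hj
    push_cast at hj
    rcases hj with hj | hj
    · left; omega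
    · right; omega

lemma green_bound (f φ : ℤ → ℝ) (hφ : ∀ m, φ (m + 1) = f m * φ m - φ (m - 1)) (n : ℕ) (hn : 12 ≤ n)
    (Λ η L δ W : ℝ) (hL : L ≤ Λ) (hδ : 0 < δ) (hW0 : 0 ≤ W)
    (hW : W * exp (η * n) * (2 * exp (-(δ * n / 10))) ≤ 1 / 2)
    (hf : ∀ a : ℕ, a ≤ n → ∀ j : ℤ, |cont f a j| ≤ exp (a * Λ + η * n))
    (j p : ℤ) (hj : exp (n * Λ) ≤ W * |cont f n j|)
    (h1 : (n : ℤ) ≤ 10 * (p - j + 1)) (h2 : (n : ℤ) ≤ 10 * (j + n - p)) :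
    ∃ x : ℤ, |x - p| ≤ n ∧ |φ p| ≤ 1 / 2 * (exp (-(L - δ) * |(p : ℝ) - x|) * |φ x|) := by
  obtain ⟨i, hi⟩ : ∃ i : ℕ, p = j + i := ⟨(p - j).toNat, by omega⟩
  obtain ⟨r, hr⟩ : ∃ r : ℕ, n = i + 1 + r := ⟨(j + n - 1 - p).toNat, by omega⟩
  have hg := green f φ hφ j i r
  rw [← hr, ← hi] at hg
  have e1 : (n : ℝ) = i + 1 + r := by exact_mod_cast hr
  have e2 : (p : ℝ) = j + i := by exact_mod_cast hi
  have e3 : (n : ℝ) * Λ = (i + 1 + r) * Λ := by rw [e1]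
  have h1' : (n : ℝ) ≤ 10 * (i + 1) := by
    have : (n : ℤ) ≤ 10 * (i + 1) := by omega
    exact_mod_cast this
  have h2' : (n : ℝ) ≤ 10 * (r + 1) := by
    have : (n : ℤ) ≤ 10 * (r + 1) := by omega
    exact_mod_cast this
  have b1 := hf r (by omega) (p + 1)
  have b2 := hf i (by omega) j
  set A := exp (-(L - δ) * (i + 1)) * |φ (j - 1)| with hA
  set B := exp (-(L - δ) * (r + 1)) * |φ (p + 1 + r)| with hB
  have step : exp (n * Λ) * |φ p| ≤ W * (exp (r * Λ + η * n) * |φ (j - 1)| + exp (i * Λ + η * n) * |φ (p + 1 + r)|) := by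
    calc exp (n * Λ) * |φ p| ≤ W * |cont f n j| * |φ p| := by gcongr
      _ = W * |cont f r (p + 1) * φ (j - 1) + cont f i j * φ (p + 1 + r)| := by
        rw [← hg, abs_mul]; ring
      _ ≤ _ := by
        gcongr
        refine (abs_add_le _ _).trans ?_
        rw [abs_mul, abs_mul]
        gcongr
  have c1 : exp (r * Λ + η * n) ≤ exp (n * Λ) * exp (η * n) * (exp (-(L - δ) * (i + 1)) * exp (-(δ * n / 10))) := by
    rw [← exp_add, ← exp_add, ← exp_add]
    apply exp_le_exp.mpr
    nlinarith [mul_nonneg (sub_nonneg.mpr hL) (show (0 : ℝ) ≤ i + 1 by positivity),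
      mul_nonneg hδ.le (sub_nonneg.mpr h1')]
  have c2 : exp (i * Λ + η * n) ≤ exp (n * Λ) * exp (η * n) * (exp (-(L - δ) * (r + 1)) * exp (-(δ * n / 10))) := by
    rw [← exp_add, ← exp_add, ← exp_add]
    apply exp_le_exp.mpr
    nlinarith [mul_nonneg (sub_nonneg.mpr hL) (show (0 : ℝ) ≤ r + 1 by positivity),
      mul_nonneg hδ.le (sub_nonneg.mpr h2')]
  have step2 : exp (n * Λ) * |φ p| ≤ exp (n * Λ) * (W * exp (η * n) * exp (-(δ * n / 10)) * (A + B)) := by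
    refine step.trans ?_
    have : W * (exp (r * Λ + η * n) * |φ (j - 1)| + exp (i * Λ + η * n) * |φ (p + 1 + r)|) ≤
      W * (exp (n * Λ) * exp (η * n) * (exp (-(L - δ) * (i + 1)) * exp (-(δ * n / 10))) * |φ (j - 1)| +
      exp (n * Λ) * exp (η * n) * (exp (-(L - δ) * (r + 1)) * exp (-(δ * n / 10))) * |φ (p + 1 + r)|) := by
      gcongr
    refine this.trans (le_of_eq ?_)
    rw [hA, hB]; ring
  have step3 := le_of_mul_le_mul_left step2 (exp_pos _)
  have hA0 : 0 ≤ A := by positivity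
  have hB0 : 0 ≤ B := by positivity
  have hZ0 : 0 ≤ W * exp (η * n) * exp (-(δ * n / 10)) := by positivity
  have step4 : |φ p| ≤ 1 / 2 * max A B := by
    have : A + B ≤ 2 * max A B := by linarith [le_max_left A B, le_max_right A B]
    have h0 : 0 ≤ max A B := le_max_of_le_left hA0
    nlinarith
  rcases max_choice A B with hm | hm
  · refine ⟨j - 1, by rw [abs_le]; omega, ?_⟩
    rw [hm] at step4
    convert step4 using 4
    have : (p : ℝ) - ((j - 1 : ℤ) : ℝ) = i + 1 := by rw [e2]; push_cast; ring
    rw [this, abs_of_nonneg (by positivity)]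
  · refine ⟨p + 1 + r, by rw [abs_le]; omega, ?_⟩
    rw [hm] at step4
    convert step4 using 4
    have : (p : ℝ) - ((p + 1 + r : ℤ) : ℝ) = -(r + 1) := by push_cast; ring
    rw [this, abs_neg, abs_of_nonneg (by positivity)]


lemma growth (f φ : ℤ → ℝ) (hφ : ∀ m, φ (m + 1) = f m * φ m - φ (m - 1)) (X : ℝ) (hX : 1 ≤ X)
    (hf : ∀ i, |f i| ≤ X - 1) (m : ℤ) (P : ℝ) (h0 : |φ m| ≤ P) (h1 : |φ (m - 1)| ≤ P) (i : ℕ) :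
    (|φ (m + i)| ≤ X ^ i * P ∧ |φ (m + i - 1)| ≤ X ^ i * P) ∧
    (|φ (m - i)| ≤ X ^ i * P ∧ |φ (m - i - 1)| ≤ X ^ i * P) := by
  have hP : 0 ≤ P := (abs_nonneg _).trans h0
  have aux : ∀ a b c g Q : ℝ, c = g * a - b → |g| ≤ X - 1 → |a| ≤ Q → |b| ≤ Q → |c| ≤ X * Q := by
    intro a b c g Q hc hg ha hb
    rw [hc]
    have h3 := abs_sub (g * a) b
    rw [abs_mul] at h3
    have : |g| * |a| ≤ (X - 1) * Q := by
      apply mul_le_mul hg ha (abs_nonneg _) (by linarith)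
    linarith
  have mono : ∀ i : ℕ, X ^ i * P ≤ X ^ (i + 1) * P := by
    intro i
    gcongr
    omega
  induction i with
  | zero => simp [h0, h1]
  | succ i ih =>
    obtain ⟨⟨a1, a2⟩, a3, a4⟩ := ih
    have e : X ^ (i + 1) * P = X * (X ^ i * P) := by ring
    refine ⟨⟨?_, ?_⟩, ?_, ?_⟩
    · rw [e]
      refine aux _ _ _ (f (m + i)) _ ?_ (hf _) a1 a2
      rw [← hφ]; congr 1; push_cast; ring
    · refine le_trans (le_of_eq ?_) (a1.trans (mono i))
      congr 2; push_cast; ring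
    · refine le_trans (le_of_eq ?_) (a4.trans (mono i))
      congr 2; push_cast; ring
    · rw [e]
      refine aux (φ (m - i - 1)) (φ (m - i)) _ (f (m - i - 1)) _ ?_ (hf _) a4 a3
      have := hφ (m - i - 1)
      rw [show m - i - 1 + 1 = m - (i : ℤ) by ring] at this
      rw [show m - ((i + 1 : ℕ) : ℤ) - 1 = m - i - 1 - 1 by push_cast; ring]
      linarith

lemma growth_abs (f φ : ℤ → ℝ) (hφ : ∀ m, φ (m + 1) = f m * φ m - φ (m - 1)) (X : ℝ) (hX : 1 ≤ X)
    (hf : ∀ i, |f i| ≤ X - 1) (m : ℤ) (P : ℝ) (h0 : |φ m| ≤ P) (h1 : |φ (m - 1)| ≤ P) (n : ℕ)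
    (x : ℤ) (hx : |x - m| ≤ n) : |φ x| ≤ X ^ n * P := by
  have hP : 0 ≤ P := (abs_nonneg _).trans h0
  rw [abs_le] at hx
  rcases le_total m x with h | h
  · obtain ⟨i, hi⟩ : ∃ i : ℕ, x = m + i := ⟨(x - m).toNat, by omega⟩
    have := (growth f φ hφ X hX hf m P h0 h1 i).1.1
    rw [hi]; refine this.trans ?_
    gcongr
    omega
  · obtain ⟨i, hi⟩ : ∃ i : ℕ, x = m - i := ⟨(m - x).toNat, by omega⟩
    have := (growth f φ hφ X hX hf m P h0 h1 i).2.1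
    rw [hi]; refine this.trans ?_
    gcongr
    omega

lemma max_arg (φ : ℤ → ℝ) (L G : ℝ) (hL : 0 ≤ L) (n : ℕ) (ms m2 T : ℤ)
    (hmax : ∀ x, |φ x| ≤ |φ ms|)
    (hreg : ∀ y : ℤ, |y| ≤ T → (n : ℤ) < |y - ms| → (n : ℤ) < |y - m2| →
      ∃ x : ℤ, |x - y| ≤ n ∧ |φ y| ≤ 1 / 2 * (exp (-L * |(y : ℝ) - x|) * |φ x|))
    (hgrow : ∀ x, |x - m2| ≤ n → |φ x| ≤ G) (y : ℤ) (hy : |y - ms| + |y| ≤ T) :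
    |φ y| ≤ exp (L * n) * max (exp (-L * |(y : ℝ) - ms|) * |φ ms|) (exp (-L * |(y : ℝ) - m2|) * G) := by
  have hy0 : |y| ≤ T := by have := abs_nonneg (y - ms); omega
  have hy1 := abs_le.mp hy0
  set v : ℤ → ℝ := fun x => exp (-L * |(y : ℝ) - x|) * |φ x| with hv
  have hv0 : ∀ x, 0 ≤ v x := fun x => by positivity
  obtain ⟨z, hz, hzmax⟩ := Finset.exists_max_image (Finset.Icc (-(T + n)) (T + n)) v
    ⟨y, by rw [Finset.mem_Icc]; omega⟩
  rw [Finset.mem_Icc] at hz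
  have hvy : |φ y| ≤ v z := by
    have := hzmax y (by rw [Finset.mem_Icc]; omega)
    simpa [hv] using this
  refine hvy.trans ?_
  have hG : 0 ≤ G := (abs_nonneg _).trans (hgrow m2 (by simp))
  have hn1 : 1 ≤ exp (L * n) := one_le_exp (by positivity)
  by_cases c1 : |z| ≤ T
  · by_cases c2 : (n : ℤ) < |z - ms|
    · by_cases c3 : (n : ℤ) < |z - m2|
      · obtain ⟨x, hx, hx2⟩ := hreg z c1 c2 c3
        have hxa := abs_le.mp hx
        have hz' := abs_le.mp c1
        have h1 := hzmax x (by rw [Finset.mem_Icc]; omega)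
        have h2 : v z ≤ 1 / 2 * v x := by
          calc v z ≤ exp (-L * |(y : ℝ) - z|) * (1 / 2 * (exp (-L * |(z : ℝ) - x|) * |φ x|)) := by
                simp only [hv]; gcongr
            _ = 1 / 2 * (exp (-L * |(y : ℝ) - z| + -L * |(z : ℝ) - x|) * |φ x|) := by
                rw [exp_add]; ring
            _ ≤ 1 / 2 * v x := by
                simp only [hv]
                gcongr
                have := abs_sub_le (y : ℝ) z x
                nlinarith
        have h3 : v z ≤ 0 := by linarith
        refine h3.trans ?_
        apply mul_nonneg (exp_pos _).le
        apply le_max_of_le_left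
        positivity
      · have c3' : |(z : ℝ) - m2| ≤ n := by
          rw [not_lt] at c3; exact_mod_cast c3
        calc v z ≤ exp (L * n + -L * |(y : ℝ) - m2|) * G := by
              simp only [hv]
              gcongr
              · have := abs_sub_le (y : ℝ) z m2
                nlinarith
              · exact hgrow z (not_lt.mp c3)
          _ = exp (L * n) * (exp (-L * |(y : ℝ) - m2|) * G) := by rw [exp_add]; ring
          _ ≤ _ := by gcongr; exact le_max_right _ _
    · have c2' : |(z : ℝ) - ms| ≤ n := by
        rw [not_lt] at c2; exact_mod_cast c2
      calc v z ≤ exp (L * n + -L * |(y : ℝ) - ms|) * |φ ms| := by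
            simp only [hv]
            gcongr ?_ * ?_
            · apply exp_le_exp.mpr
              have := abs_sub_le (y : ℝ) z ms
              nlinarith
            · exact hmax z
        _ = exp (L * n) * (exp (-L * |(y : ℝ) - ms|) * |φ ms|) := by rw [exp_add]; ring
        _ ≤ _ := by gcongr; exact le_max_left _ _
  · have h1 : |y - ms| ≤ |y - z| := by
      have := abs_sub_abs_le_abs_sub z y
      rw [abs_sub_comm z y] at this
      omega
    have h1' : |(y : ℝ) - ms| ≤ |(y : ℝ) - z| := by exact_mod_cast h1
    calc v z ≤ exp (-L * |(y : ℝ) - ms|) * |φ ms| := by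
          simp only [hv]
          gcongr ?_ * ?_
          · apply exp_le_exp.mpr; nlinarith
          · exact hmax z
      _ ≤ max (exp (-L * |(y : ℝ) - ms|) * |φ ms|) (exp (-L * |(y : ℝ) - m2|) * G) := le_max_left _ _
      _ ≤ _ := by
        apply le_mul_of_one_le_left _ hn1
        apply le_max_of_le_left
        positivity


lemma W_small (τ C C₁ η c δ : ℝ) (d : ℕ) (hτ : 0 < τ) (hC₁ : 3 ≤ C₁) (hc : 0 < c)
    (hδ : 0 < δ / 10 - 2 * η) :
    ∃ K : ℕ, ∀ k : ℕ, K ≤ k → ∀ n : ℕ, n ≤ k → c * k ≤ n →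
      (4 * n) * (exp (η * n + C) / (τ / (2 * (2 * (10 * C₁ * k)) ^ d)) ^ 4) * exp (η * n) *
        (2 * exp (-(δ * n / 10))) ≤ 1 / 2 := by
  set A : ℝ := 8 * exp C * (16 * (20 * C₁) ^ (4 * d) / τ ^ 4) with hA
  have hA0 : 0 < A := by positivity
  set b : ℝ := (δ / 10 - 2 * η) * c with hb
  have hb0 : 0 < b := by positivity
  have h1 := isLittleO_pow_exp_pos_mul_atTop (4 * d + 1) hb0
  have h2 := (h1.def (show 0 < 1 / (2 * A) by positivity)).natCast_atTop
  obtain ⟨K, hK⟩ := eventually_atTop.mp h2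
  refine ⟨max K 1, ?_⟩
  intro k hk n hn hcn
  have hk1 : 1 ≤ k := le_trans (le_max_right _ _) hk
  have hk0 : (0 : ℝ) < k := by exact_mod_cast hk1
  have h3 := hK k (le_trans (le_max_left _ _) hk)
  rw [norm_of_nonneg (by positivity), norm_of_nonneg (by positivity)] at h3
  have e1 : (4 * n) * (exp (η * n + C) / (τ / (2 * (2 * (10 * C₁ * k)) ^ d)) ^ 4) * exp (η * n) *
        (2 * exp (-(δ * n / 10))) = A * (n * (k : ℝ) ^ (4 * d)) * exp (-((δ / 10 - 2 * η) * n)) := by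
    have : exp (-((δ / 10 - 2 * η) * n)) = exp (η * n) * exp (η * n) * exp (-(δ * n / 10)) := by
      rw [← exp_add, ← exp_add]; congr 1; ring
    rw [this, hA, exp_add]
    rw [show 2 * (10 * C₁ * k) = (20 * C₁) * k by ring, mul_pow (20 * C₁) (k : ℝ) d]
    rw [mul_comm 4 d, pow_mul, pow_mul]
    field_simp
    ring
  rw [e1]
  have h4 : exp (-((δ / 10 - 2 * η) * n)) ≤ exp (-(b * k)) := by
    apply exp_le_exp.mpr
    rw [hb]
    nlinarith
  have hnk : (n : ℝ) ≤ k := by exact_mod_cast hn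
  calc A * (n * (k : ℝ) ^ (4 * d)) * exp (-((δ / 10 - 2 * η) * n))
      ≤ A * (k * (k : ℝ) ^ (4 * d)) * exp (-(b * k)) := by gcongr
    _ = A * (k : ℝ) ^ (4 * d + 1) * exp (-(b * k)) := by ring
    _ ≤ A * (1 / (2 * A) * exp (b * k)) * exp (-(b * k)) := by gcongr
    _ = 1 / 2 * (exp (b * k) * exp (-(b * k))) := by field_simp
    _ = 1 / 2 := by rw [← exp_add]; simp

lemma energy_bound (lam α θ E : ℝ) (hlam : 1 < lam) (φ : ℤ → ℝ) (ms : ℤ)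
    (hE : IsEigenfunction (amoPot lam α θ) E φ) (hmax : ∀ n, |φ n| ≤ |φ ms|) (h0 : φ ms ≠ 0) :
    |E| ≤ 2 + 2 * lam := by
  have h1 := hE ms
  have hp : 0 < |φ ms| := abs_pos.mpr h0
  have h2 : |E| * |φ ms| ≤ (2 + 2 * lam) * |φ ms| := by
    rw [← abs_mul, ← h1]
    have a1 := abs_add_le (φ (ms + 1) + φ (ms - 1)) (amoPot lam α θ ms * φ ms)
    have a2 := abs_add_le (φ (ms + 1)) (φ (ms - 1))
    have a3 := hmax (ms + 1)
    have a4 := hmax (ms - 1)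
    have a5 : |amoPot lam α θ ms| ≤ 2 * lam := by
      simp only [amoPot]
      rw [abs_mul, abs_of_pos (by linarith : 0 < 2 * lam)]
      have := abs_cos_le_one (2 * π * (θ + ms * α))
      nlinarith
    rw [abs_mul] at a1
    nlinarith
  exact le_of_mul_le_mul_right h2 hp

lemma pn_left (a b : ℝ) : |a| ≤ pairNorm a b := by
  unfold pairNorm
  apply le_sqrt_of_sq_le
  rw [sq_abs]; nlinarith [sq_nonneg b]

lemma pn_right (a b : ℝ) : |b| ≤ pairNorm a b := by
  unfold pairNorm
  apply le_sqrt_of_sq_le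
  rw [sq_abs]; nlinarith [sq_nonneg a]

lemma pn_le (a b : ℝ) : pairNorm a b ≤ |a| + |b| := by
  unfold pairNorm
  rw [sqrt_le_left (by positivity)]
  nlinarith [sq_abs a, sq_abs b, mul_nonneg (abs_nonneg a) (abs_nonneg b)]


set_option maxHeartbeats 1000000 in
lemma amo_core (lam α θ τ : ℝ) (d : ℕ) (hlam : 1 < lam) (hDC : DC α τ d) (C₁ : ℝ) (hC₁ : 3 ≤ C₁)
    (ε : ℝ) (hε : 0 < ε) (hεL : ε < log lam) :
    ∃ K : ℕ, ∀ k : ℕ, K ≤ k → ∀ (φ : ℤ → ℝ) (E : ℝ) (ms k₀ : ℤ),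
      IsEigenfunction (amoPot lam α θ) E φ → φ ms ≠ 0 → (∀ n : ℤ, |φ n| ≤ |φ ms|) →
      |(ms : ℝ)| ≤ k → |(k₀ : ℝ)| ≤ 10 * C₁ * k →
      (∀ x : ℤ, |(x : ℝ)| ≤ 10 * C₁ * k →
        |sin (π * (2 * θ + k₀ * α))| ≤ |sin (π * (2 * θ + x * α))|) →
      ∀ y : ℤ, |(y : ℝ)| ≤ C₁ * k + 1 →
        |φ y| ≤ exp (ε / 4 * k) *
          max (exp (-(log lam - ε / 2) * |(y : ℝ) - ms|) * pairNorm (φ ms) (φ (ms - 1)))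
            (exp (-(log lam - ε / 2) * |(y : ℝ) - (k₀ - ms : ℤ)|) *
              pairNorm (φ (k₀ - ms)) (φ (k₀ - ms - 1))) := by
  set L := log lam with hLdef
  set X : ℝ := 3 + 4 * lam with hX
  have hX1 : 1 < X := by rw [hX]; linarith
  set B := log X with hB
  have hB0 : 0 < B := log_pos hX1
  have hL0 : 0 < L := hε.trans hεL
  obtain ⟨η, hη⟩ : ∃ η, η = ε / 200 := ⟨_, rfl⟩
  have hη0 : 0 < η := by rw [hη]; positivity
  obtain ⟨C, hC0, hC⟩ := big_box α τ d hDC η hη0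
  obtain ⟨σ, hσ⟩ : ∃ σ, σ = ε / (4 * (L + B)) := ⟨_, rfl⟩
  have hσ0 : 0 < σ := by rw [hσ]; positivity
  have hσ1 : σ * (L + B) = ε / 4 := by rw [hσ]; field_simp
  have hσ2 : σ ≤ 1 := by
    rw [hσ, div_le_one (by positivity)]; linarith
  obtain ⟨c, hc⟩ : ∃ c, c = σ / 2 * exp (-(B / η)) := ⟨_, rfl⟩
  have hc0 : 0 < c := by rw [hc]; positivity
  obtain ⟨K1, hK1⟩ := W_small τ C C₁ η c (ε / 2) d hDC.1 hC₁ hc0 (by rw [hη]; linarith)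
  obtain ⟨K2, hK2⟩ := exists_nat_ge (12 / c)
  obtain ⟨K3, hK3⟩ := exists_nat_ge (2 / σ)
  refine ⟨max (max K1 K2) (max K3 1), ?_⟩
  intro k hk φ E ms k₀ hE hms hmax hmsk hk0 hmin y hy
  have hkK1 : K1 ≤ k := by omega
  have hkK2 : 12 ≤ c * k := by
    have : (K2 : ℝ) ≤ k := by exact_mod_cast (by omega : K2 ≤ k)
    have := hK2.trans this
    rw [div_le_iff₀ hc0] at this; linarith
  have hkK3 : 2 ≤ σ * k := by
    have : (K3 : ℝ) ≤ k := by exact_mod_cast (by omega : K3 ≤ k)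
    have := hK3.trans this
    rw [div_le_iff₀ hσ0] at this; linarith
  have hk1 : (1 : ℝ) ≤ k := by exact_mod_cast (by omega : 1 ≤ k)
  have hCk : 3 * (k : ℝ) ≤ C₁ * k := by gcongr
  have hEb := energy_bound lam α θ E hlam φ ms hE hmax hms
  have hfl : ((⌊σ * k⌋₊ : ℕ) : ℝ) ≤ σ * k := Nat.floor_le (by positivity)
  have hfl2 : σ * k < (⌊σ * k⌋₊ : ℕ) + 1 := Nat.lt_floor_add_one _
  obtain ⟨n, Λ, hn1, hnk', hnk2, hLΛ, hup, hlow⟩ := scale lam α E η hlam hEb hη0 ⌊σ * k⌋₊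
    (by rw [Nat.one_le_floor_iff]; linarith)
  have hnσ : (n : ℝ) ≤ σ * k := le_trans (by exact_mod_cast hnk') hfl
  have hnk : (n : ℝ) ≤ k := hnσ.trans (mul_le_of_le_one_left (by linarith) hσ2)
  have hnkN : n ≤ k := by exact_mod_cast hnk
  have hcn : c * k ≤ n := by
    have h1 : σ * k / 2 ≤ n * exp (B / η) := by linarith
    have h2 : exp (B / η) * exp (-(B / η)) = 1 := by rw [← exp_add]; simp
    calc c * k = (σ * k / 2) * exp (-(B / η)) := by rw [hc]; ring
      _ ≤ (n * exp (B / η)) * exp (-(B / η)) := by gcongr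
      _ = n := by rw [mul_assoc, h2, mul_one]
  have hn12 : 12 ≤ n := by
    have : (12 : ℝ) ≤ n := hkK2.trans hcn
    exact_mod_cast this
  have hW := hK1 k hkK1 n hnkN hcn
  obtain ⟨hs0, hs1, hsA, hsB⟩ := small_divisor α τ θ (10 * C₁ * k) d hDC k₀ (by linarith) hk0 hmin
  set s := τ / (2 * (2 * (10 * C₁ * k)) ^ d) with hs
  set W := (4 * (n : ℝ)) * (exp (η * n + C) / s ^ 4) with hWdef
  have hW0 : 0 ≤ W := by positivity
  set f : ℤ → ℝ := fun i => E - amoPot lam α θ i with hf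
  have hφ : ∀ m, φ (m + 1) = f m * φ m - φ (m - 1) := by
    intro m; have := hE m; simp only [hf]; linarith
  have hfb : ∀ i, |f i| ≤ X - 1 := fun i => pot_bound lam E _ (by linarith) hEb
  have hcf : ∀ a : ℕ, a ≤ n → ∀ j : ℤ, |cont f a j| ≤ exp (a * Λ + η * n) := by
    intro a ha j
    rw [hf, cont_amo]
    exact hup a ha _
  obtain ⟨T, hT⟩ : ∃ T : ℤ, T = ⌊3 * C₁ * k⌋ := ⟨_, rfl⟩
  have hT1 : (T : ℝ) ≤ 3 * C₁ * k := by rw [hT]; exact Int.floor_le _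
  have hle : ∀ x : ℤ, (x : ℝ) ≤ 3 * C₁ * k → x ≤ T := fun x hx => by
    rw [hT]; exact Int.le_floor.mpr hx
  have hmsT : |ms| ≤ T := hle _ (by push_cast; linarith)
  have hR : ∀ x : ℤ, |x| ≤ 2 * T + 3 * n → |(x : ℝ)| ≤ 10 * C₁ * k := by
    intro x hx
    have : (|x| : ℝ) ≤ 2 * T + 3 * n := by exact_mod_cast hx
    linarith
  have hbig : ∀ (a b : ℤ) (N M : ℕ), N ≤ n → M ≤ n → n + 1 ≤ N + M →
      Disjoint (Finset.Ico a (a + N)) (Finset.Ico b (b + M)) →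
      (∀ j ∈ Finset.Ico a (a + N) ∪ Finset.Ico b (b + M),
        ∀ l ∈ Finset.Ico a (a + N) ∪ Finset.Ico b (b + M), j ≠ l →
          s ≤ |sin (π * (((j - l : ℤ) : ℝ) * α))| ∧
          s ≤ |sin (π * (2 * θ + ((j + l + n - 1 : ℤ) : ℝ) * α))|) →
      ∃ j ∈ Finset.Ico a (a + N) ∪ Finset.Ico b (b + M), exp (n * Λ) ≤ W * |cont f n j| := by
    intro a b N M h1 h2 h3 h4 h5
    exact hC lam θ E s Λ n a b N M h1 h2 h3 h4 hs0 hs1 h5 hlow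
  have htwo : ∀ p q : ℤ, |p| ≤ T → |q| ≤ T → (n : ℤ) < |p - q| → (n : ℤ) < |p + q - k₀| →
      (n : ℤ) < |2 * p - k₀| →
      ∃ j, exp (n * Λ) ≤ W * |cont f n j| ∧
        (((n : ℤ) ≤ 10 * (p - j + 1) ∧ (n : ℤ) ≤ 10 * (j + n - p)) ∨
        ((n : ℤ) ≤ 10 * (q - j + 1) ∧ (n : ℤ) ≤ 10 * (j + n - q))) := by
    intro p q h1 h2 h3 h4 h5
    exact two_point n hn12 (fun x => s ≤ |sin (π * ((x : ℝ) * α))|)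
      (fun x => s ≤ |sin (π * (2 * θ + (x : ℝ) * α))|) (fun j => exp (n * Λ) ≤ W * |cont f n j|)
      p q k₀ T h1 h2 h3 h4 h5 (fun x hx hxR => hsA x hx (hR x hxR))
      (fun x hx hxR => hsB x hx (hR x hxR)) hbig
  have hgb : ∀ j p : ℤ, exp (n * Λ) ≤ W * |cont f n j| → (n : ℤ) ≤ 10 * (p - j + 1) →
      (n : ℤ) ≤ 10 * (j + n - p) →
      ∃ x : ℤ, |x - p| ≤ n ∧ |φ p| ≤ 1 / 2 * (exp (-(L - ε / 2) * |(p : ℝ) - x|) * |φ x|) :=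
    fun j p h1 h2 h3 => green_bound f φ hφ n hn12 Λ η L (ε / 2) W hLΛ (by positivity) hW0 hW hcf
      j p h1 h2 h3
  have hLp : 0 ≤ L - ε / 2 := by linarith
  have hno : ∀ j : ℤ, exp (n * Λ) ≤ W * |cont f n j| → (n : ℤ) ≤ 10 * (ms - j + 1) →
      (n : ℤ) ≤ 10 * (j + n - ms) → False := by
    intro j h1 h2 h3
    obtain ⟨x, -, hx⟩ := hgb j ms h1 h2 h3
    have e1 : exp (-(L - ε / 2) * |(ms : ℝ) - x|) ≤ 1 := by
      apply exp_le_one_iff.mpr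
      nlinarith [abs_nonneg ((ms : ℝ) - x)]
    have e2 := hmax x
    have e3 : 0 < |φ ms| := abs_pos.mpr hms
    have e4 : exp (-(L - ε / 2) * |(ms : ℝ) - x|) * |φ x| ≤ 1 * |φ ms| := by gcongr
    linarith
  have hreg : ∀ y : ℤ, |y| ≤ T → (n : ℤ) < |y - ms| → (n : ℤ) < |y - (k₀ - ms)| →
      ∃ x : ℤ, |x - y| ≤ n ∧ |φ y| ≤ 1 / 2 * (exp (-(L - ε / 2) * |(y : ℝ) - x|) * |φ x|) := by
    intro y h1 h2 h3
    by_cases hc : (n : ℤ) < |2 * ms - k₀|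
    · obtain ⟨j, hj, hw | hw⟩ := htwo ms y hmsT h1 (by rwa [abs_sub_comm])
        (by convert h3 using 2; ring) hc
      · exact (hno j hj hw.1 hw.2).elim
      · exact hgb j y hj hw.1 hw.2
    · obtain ⟨j, hj, hw | hw⟩ := htwo y ms h1 hmsT h2
        (by convert h3 using 2; ring) (by
          rw [not_lt, abs_le] at hc
          rw [lt_abs] at h2 ⊢
          omega)
      · exact hgb j y hj hw.1 hw.2
      · exact (hno j hj hw.1 hw.2).elim
  set P1 := pairNorm (φ ms) (φ (ms - 1)) with hP1
  set P2 := pairNorm (φ (k₀ - ms)) (φ (k₀ - ms - 1)) with hP2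
  have hP20 : 0 ≤ P2 := sqrt_nonneg _
  have hgrow : ∀ x, |x - (k₀ - ms)| ≤ n → |φ x| ≤ X ^ n * P2 := fun x hx =>
    growth_abs f φ hφ X hX1.le hfb (k₀ - ms) P2 (pn_left _ _) (pn_right _ _) n x hx
  have hfin := max_arg φ (L - ε / 2) (X ^ n * P2) hLp n ms (k₀ - ms) T hmax hreg hgrow y (by
    apply hle
    push_cast
    have := abs_sub (y : ℝ) ms
    linarith)
  refine hfin.trans ?_
  have hXn : X ^ n = exp (B * n) := by
    rw [mul_comm, exp_nat_mul, hB, exp_log (by linarith)]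
  set a1 := exp (-(L - ε / 2) * |(y : ℝ) - ms|) with ha1
  set a2 := exp (-(L - ε / 2) * |(y : ℝ) - (k₀ - ms : ℤ)|) with ha2
  have hmx : max (a1 * |φ ms|) (a2 * (X ^ n * P2)) ≤ exp (B * n) * max (a1 * P1) (a2 * P2) := by
    apply max_le
    · calc a1 * |φ ms| ≤ a1 * P1 := by gcongr; exact pn_left _ _
        _ ≤ max (a1 * P1) (a2 * P2) := le_max_left _ _
        _ ≤ _ := by
          apply le_mul_of_one_le_left
          · apply le_max_of_le_right; positivity
          · exact one_le_exp (by positivity)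
    · calc a2 * (X ^ n * P2) = exp (B * n) * (a2 * P2) := by rw [hXn]; ring
        _ ≤ _ := by gcongr; exact le_max_right _ _
  calc exp ((L - ε / 2) * n) * max (a1 * |φ ms|) (a2 * (X ^ n * P2))
      ≤ exp ((L - ε / 2) * n) * (exp (B * n) * max (a1 * P1) (a2 * P2)) := by gcongr
    _ = exp ((L - ε / 2) * n + B * n) * max (a1 * P1) (a2 * P2) := by rw [exp_add]; ring
    _ ≤ _ := by
      apply mul_le_mul_of_nonneg_right
      · apply exp_le_exp.mpr
        have : (L + B) * n ≤ (L + B) * (σ * k) := by gcongr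
        have e : (L + B) * (σ * k) = ε / 4 * k := by rw [← hσ1]; ring
        have : 0 ≤ ε / 2 * n := by positivity
        linarith
      · apply le_max_of_le_right; positivity

theorem amo_block_resolvent_expansion_bound
    (lam α θ : ℝ) (hlam : 1 < lam) (hα : IsDiophantine α)
    (C₁ : ℝ) (hC₁ : 3 ≤ C₁) :
    ∃ ε₀ : ℝ, 0 < ε₀ ∧ ∀ ε : ℝ, 0 < ε → ε < ε₀ →
      ∃ K : ℕ, ∀ k : ℕ, K ≤ k →
        ∀ (φ : ℤ → ℝ) (E : ℝ) (ms k₀ : ℤ),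
          IsEigenfunction (amoPot lam α θ) E φ →
          Summable (fun n : ℤ => φ n ^ 2) →
          (∑' n : ℤ, φ n ^ 2) = 1 →
          (∀ n : ℤ, |φ n| ≤ |φ ms|) →
          |(ms : ℝ)| ≤ (k : ℝ) →
          |(k₀ : ℝ)| ≤ 10 * C₁ * k →
          (∀ x : ℤ, |(x : ℝ)| ≤ 10 * C₁ * k →
            |Real.sin (Real.pi * (2 * θ + k₀ * α))| ≤
              |Real.sin (Real.pi * (2 * θ + x * α))|) →
          ∀ y : ℤ, |(y : ℝ)| ≤ C₁ * k →
            pairNorm (φ y) (φ (y - 1)) ≤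
              Real.exp (ε * k) *
                max (pairNorm (φ ms) (φ (ms - 1)) *
                      Real.exp (-(Real.log lam - ε) * |(y : ℝ) - (ms : ℝ)|))
                    (pairNorm (φ (k₀ - ms)) (φ (k₀ - ms - 1)) *
                      Real.exp (-(Real.log lam - ε) * |(y : ℝ) - ((k₀ : ℝ) - (ms : ℝ))|)) := by
  obtain ⟨τ, d, hDC⟩ := dc_of_dioph α hα
  refine ⟨Real.log lam, Real.log_pos hlam, ?_⟩
  intro ε hε hεL
  obtain ⟨K, hK⟩ := amo_core lam α θ τ d hlam hDC C₁ hC₁ ε hε hεL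
  obtain ⟨K2, hK2⟩ := exists_nat_ge (2 * Real.log (1 + lam) / ε)
  refine ⟨max K K2, ?_⟩
  intro k hk φ E ms k₀ hE hsum hone hmax hms hk0 hmin y hy
  have hne : φ ms ≠ 0 := by
    intro h0
    have : ∀ n, φ n ^ 2 = 0 := by
      intro n
      have := hmax n
      rw [h0, abs_zero] at this
      have := abs_nonpos_iff.mp this
      rw [this]; norm_num
    simp [this] at hone
  have core := hK k (le_trans (le_max_left _ _) hk) φ E ms k₀ hE hne hmax hms hk0 hmin
  have h1 := core y (by linarith)
  have h2 := core (y - 1) (by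
    push_cast
    have := abs_sub (y : ℝ) 1
    rw [abs_one] at this
    linarith)
  set L := Real.log lam with hL
  set P1 := pairNorm (φ ms) (φ (ms - 1)) with hP1
  set P2 := pairNorm (φ (k₀ - ms)) (φ (k₀ - ms - 1)) with hP2
  have hP10 : 0 ≤ P1 := sqrt_nonneg _
  have hP20 : 0 ≤ P2 := sqrt_nonneg _
  set Z := max (P1 * Real.exp (-(L - ε) * |(y : ℝ) - (ms : ℝ)|))
    (P2 * Real.exp (-(L - ε) * |(y : ℝ) - ((k₀ : ℝ) - (ms : ℝ))|)) with hZ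
  have hZ0 : 0 ≤ Z := by apply le_max_of_le_left; positivity
  have hexp : Real.exp L = lam := Real.exp_log (by linarith)
  push_cast at h1 h2
  have c1 : ∀ t : ℝ, exp (-(L - ε / 2) * |(y : ℝ) - t|) ≤ exp (-(L - ε) * |(y : ℝ) - t|) := by
    intro t
    apply exp_le_exp.mpr
    nlinarith [abs_nonneg ((y : ℝ) - t)]
  have c2 : ∀ t : ℝ, exp (-(L - ε / 2) * |(y : ℝ) - 1 - t|) ≤ lam * exp (-(L - ε) * |(y : ℝ) - t|) := by
    intro t
    refine le_trans ?_ (le_of_eq (congrArg (fun z => z * exp (-(L - ε) * |(y : ℝ) - t|)) hexp))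
    show _ ≤ exp L * exp (-(L - ε) * |(y : ℝ) - t|)
    rw [← exp_add]
    apply exp_le_exp.mpr
    have h3 : |(y : ℝ) - t| ≤ |(y : ℝ) - 1 - t| + 1 := by
      have := abs_add_le ((y : ℝ) - 1 - t) 1
      rw [abs_one] at this
      rwa [show (y : ℝ) - 1 - t + 1 = y - t by ring] at this
    nlinarith [abs_nonneg ((y : ℝ) - t), abs_nonneg ((y : ℝ) - 1 - t)]
  have d1 : |φ y| ≤ exp (ε / 4 * k) * Z := by
    refine h1.trans ?_
    gcongr
    apply max_le
    · refine le_trans ?_ (le_max_left _ _)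
      rw [mul_comm P1]
      exact mul_le_mul_of_nonneg_right (c1 _) hP10
    · refine le_trans ?_ (le_max_right _ _)
      rw [mul_comm P2]
      exact mul_le_mul_of_nonneg_right (c1 _) hP20
  have d2 : |φ (y - 1)| ≤ exp (ε / 4 * k) * (lam * Z) := by
    refine h2.trans ?_
    gcongr
    apply max_le
    · refine le_trans (mul_le_mul_of_nonneg_right (c2 _) hP10) ?_
      rw [mul_assoc, mul_comm _ P1]
      exact mul_le_mul_of_nonneg_left (le_max_left _ _) (by linarith)
    · refine le_trans (mul_le_mul_of_nonneg_right (c2 _) hP20) ?_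
      rw [mul_assoc, mul_comm _ P2]
      exact mul_le_mul_of_nonneg_left (le_max_right _ _) (by linarith)
  have hk2 : 1 + lam ≤ exp (ε / 2 * k) := by
    have a1 : (K2 : ℝ) ≤ k := by exact_mod_cast (le_trans (le_max_right _ _) hk)
    have a2 := hK2.trans a1
    rw [div_le_iff₀ hε] at a2
    rw [← Real.log_le_iff_le_exp (by linarith)]
    linarith
  calc pairNorm (φ y) (φ (y - 1)) ≤ |φ y| + |φ (y - 1)| := pn_le _ _
    _ ≤ exp (ε / 4 * k) * Z + exp (ε / 4 * k) * (lam * Z) := add_le_add d1 d2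
    _ = exp (ε / 4 * k) * (1 + lam) * Z := by ring
    _ ≤ exp (ε / 4 * k) * exp (ε / 2 * k) * Z := by gcongr
    _ = exp (ε / 4 * k + ε / 2 * k) * Z := by rw [exp_add]
    _ ≤ exp (ε * k) * Z := by
      gcongr
      have : 0 ≤ ε * k := by positivity
      linarith
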